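/- Let x ∈ H^s for some s > β/3. Suppose that g ∈ H^{-s}, that g_n is non-decreasing, that g_n 2^{-sn} is eventually non-increasing, and that ∑_{n≥1} g_n^{-1} = ∞. Then there exists a weak solution of the dyadic model with initial condition x in the class L^∞([0,∞); H^s), and this solution is unique in the class L³_loc([0,∞); W^{β/3,3}). -/

import Mathlib

open scoped BigOperators ENNReal
open MeasureTheory Filter Set Topology

/-- `kₙ = 2^{βn}`. -/
noncomputable def kk (β : ℝ) (n : ℕ) : ℝ := (2 : ℝ) ^ (β * n)

/-- A weak solution of the dyadic model: `X 0 ≡ 0`, `X n 0 = x n`, and the ODE holds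
for every `n ≥ 1` and `t ≥ 0` (the derivative being taken within `[0,∞)`). -/
def IsDyadicSolution (β : ℝ) (φ g : ℕ → ℝ) (x : ℕ → ℝ) (X : ℕ → ℝ → ℝ) : Prop :=
  (∀ t : ℝ, X 0 t = 0) ∧
  (∀ n : ℕ, 1 ≤ n → X n 0 = x n) ∧
  (∀ n : ℕ, 1 ≤ n → ∀ t : ℝ, 0 ≤ t →
    HasDerivWithinAt (X n)
      (φ (n - 1) * kk β (n - 1) * (X (n - 1) t) ^ 2
        - φ n * kk β n * X n t * X (n + 1) t
        - kk β n / g n * X n t) (Set.Ici 0) t)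

/-- `x ∈ Hˢ`, i.e. `∑_{n≥1} 2^{2sn} xₙ² < ∞`. -/
def MemHs (s : ℝ) (x : ℕ → ℝ) : Prop :=
  Summable (fun n : ℕ => (2 : ℝ) ^ (2 * s * ((n : ℝ) + 1)) * (x (n + 1)) ^ 2)

/-- `X ∈ L^∞(I; Hˢ)`. -/
def MemLinftyHs (s : ℝ) (X : ℕ → ℝ → ℝ) (I : Set ℝ) : Prop :=
  ∃ M : ℝ, ∀ t ∈ I,
    Summable (fun n : ℕ => (2 : ℝ) ^ (2 * s * ((n : ℝ) + 1)) * (X (n + 1) t) ^ 2) ∧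
    (∑' n : ℕ, (2 : ℝ) ^ (2 * s * ((n : ℝ) + 1)) * (X (n + 1) t) ^ 2) ≤ M

/-- `X ∈ L³([0,T]; W^{β/3,3})`, i.e. `∫_0^T ∑_{n≥1} 2^{βn} |Xₙ(t)|³ dt < ∞`. -/
def MemL3W (β : ℝ) (X : ℕ → ℝ → ℝ) (T : ℝ) : Prop :=
  (∫⁻ t in Set.Ioc (0 : ℝ) T,
      ∑' n : ℕ, ENNReal.ofReal ((2 : ℝ) ^ (β * ((n : ℝ) + 1)) * |X (n + 1) t| ^ 3)) < ⊤

/-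
The Galerkin truncations are controlled shell by shell. Let `d n` be the square root of the largest
value on `[0, T]` of the energy in the shells beyond `n`, augmented by what these shells have
dissipated. The flux into the shells beyond `n + 1` is at most `γ n * d (n + 1)` times the
dissipation of shell `n + 1`, where `γ n ∼ g (n + 1)`, so
`d (n + 1) ^ 2 ≤ a (n + 1) ^ 2 + γ n * d (n + 1) * (d n ^ 2 - d (n + 1) ^ 2)`
with `a` the tail energies of the initial state. Since `∑ 1 / γ n = ∞`, the product
`γ n * d (n + 1)` is small at some index bounded independently of the truncation, and from there on
the recursion, weighted by `2 ^ (s * n)`, contracts: the truncations are bounded in `L^∞ H^s`.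

Once `|X n| ≲ 2 ^ (-s * n)`, the damping absorbs the transport linearised around `X`, because
`g n * 2 ^ (-s * n) → 0`. By Grönwall, the distance between two solutions in the shells up to `N` is
then controlled by `2 ^ (β * N)` times the time integral of the cubes of the shells `N` and `N + 1`.
This vanishes as `N → ∞` for bounded families in `L^∞ H^s` with `s > β / 3`, so the truncations
converge, and also for solutions in `L³ W^{β/3,3}`, which gives uniqueness.
-/

section RealAnalysis

variable {T K : ℝ} {f f' : ℝ → ℝ}

lemma le_of_hasDerivWithinAt_nonpos
    (hf : ∀ t ∈ Icc 0 T, HasDerivWithinAt f (f' t) (Icc 0 T) t) (hf' : ∀ t ∈ Icc 0 T, f' t ≤ 0)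
    {t : ℝ} (ht : t ∈ Icc 0 T) : f t ≤ f 0 :=
  antitoneOn_of_hasDerivWithinAt_nonpos (convex_Icc 0 T) (fun u hu => (hf u hu).continuousWithinAt)
    (fun u hu => (hf u (interior_subset hu)).mono interior_subset)
    (fun u hu => hf' u (interior_subset hu)) ⟨le_rfl, ht.1.trans ht.2⟩ ht ht.1

lemma hasDerivWithinAt_intervalIntegral_of_continuousOn (hf : ContinuousOn f (Icc 0 T)) {t : ℝ}
    (ht : t ∈ Icc 0 T) : HasDerivWithinAt (fun u => ∫ v in (0 : ℝ)..u, f v) (f t) (Icc 0 T) t := by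
  have : Fact (t ∈ Icc 0 T) := ⟨ht⟩
  refine intervalIntegral.integral_hasDerivWithinAt_right ?_
    (hf.stronglyMeasurableAtFilter_nhdsWithin measurableSet_Icc t) (hf t ht)
  exact (hf.mono (Icc_subset_Icc_right ht.2)).intervalIntegrable_of_Icc ht.1

lemma integral_eq_sub_of_hasDerivWithinAt_Icc
    (hf : ∀ t ∈ Icc 0 T, HasDerivWithinAt f (f' t) (Icc 0 T) t) (hf' : ContinuousOn f' (Icc 0 T))
    {t : ℝ} (ht : t ∈ Icc 0 T) : ∫ u in (0 : ℝ)..t, f' u = f t - f 0 := by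
  have hsub : Icc 0 t ⊆ Icc 0 T := Icc_subset_Icc_right ht.2
  refine intervalIntegral.integral_eq_sub_of_hasDerivAt_of_le ht.1
    (fun u hu => ((hf u (hsub hu)).mono hsub).continuousWithinAt) (fun u hu => ?_)
    ((hf'.mono hsub).intervalIntegrable_of_Icc ht.1)
  exact (hf u (hsub (Ioo_subset_Icc_self hu))).hasDerivAt
    (mem_of_superset (Icc_mem_nhds hu.1 hu.2) hsub)

/- Integrating factor: `exp (-K t) f t - ∫₀ᵗ B` is nonincreasing, because `exp (-K t) B ≤ B`. -/
lemma le_exp_mul_add_integral_of_hasDerivWithinAt_le {B : ℝ → ℝ} (hK : 0 ≤ K)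
    (hB : ContinuousOn B (Icc 0 T)) (hB0 : ∀ t ∈ Icc 0 T, 0 ≤ B t)
    (hf : ∀ t ∈ Icc 0 T, HasDerivWithinAt f (f' t) (Icc 0 T) t)
    (hf' : ∀ t ∈ Icc 0 T, f' t ≤ K * f t + B t) {t : ℝ} (ht : t ∈ Icc 0 T) :
    f t ≤ Real.exp (K * t) * (f 0 + ∫ u in (0 : ℝ)..t, B u) := by
  have hderiv : ∀ u ∈ Icc 0 T, HasDerivWithinAt
      (fun u => Real.exp (-(K * u)) * f u - ∫ v in (0 : ℝ)..u, B v)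
      (Real.exp (-(K * u)) * (f' u - K * f u) - B u) (Icc 0 T) u := fun u hu => by
    have hexp : HasDerivAt (fun u => Real.exp (-(K * u))) (Real.exp (-(K * u)) * -(K * 1)) u :=
      ((hasDerivAt_id u).const_mul K).neg.exp
    refine ((hexp.hasDerivWithinAt.fun_mul (hf u hu)).fun_sub
      (hasDerivWithinAt_intervalIntegral_of_continuousOn hB hu)).congr_deriv ?_
    ring
  have hnonpos : ∀ u ∈ Icc 0 T, Real.exp (-(K * u)) * (f' u - K * f u) - B u ≤ 0 := fun u hu => by
    have hle_one : Real.exp (-(K * u)) ≤ 1 :=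
      Real.exp_le_one_iff.2 (neg_nonpos.2 (mul_nonneg hK hu.1))
    have h := mul_le_mul_of_nonneg_left (sub_le_iff_le_add'.2 (hf' u hu))
      (Real.exp_pos (-(K * u))).le
    linarith [mul_le_of_le_one_left (hB0 u hu) hle_one]
  have h := le_of_hasDerivWithinAt_nonpos hderiv hnonpos ht
  simp only [mul_zero, neg_zero, Real.exp_zero, one_mul, intervalIntegral.integral_same,
    sub_zero] at h
  calc f t = Real.exp (K * t) * (Real.exp (-(K * t)) * f t) := by
        rw [← mul_assoc, ← Real.exp_add, add_neg_cancel, Real.exp_zero, one_mul]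
    _ ≤ _ := mul_le_mul_of_nonneg_left (by linarith) (Real.exp_pos _).le

lemma hasDerivWithinAt_of_tendsto_of_dominated {F F' : ℕ → ℝ → ℝ} {C : ℝ}
    (hF : ∀ N, ∀ t ∈ Icc 0 T, HasDerivWithinAt (F N) (F' N t) (Icc 0 T) t)
    (hF'c : ∀ N, ContinuousOn (F' N) (Icc 0 T)) (hF'b : ∀ N, ∀ t ∈ Icc 0 T, |F' N t| ≤ C)
    (hf'c : ContinuousOn f' (Icc 0 T))
    (hFlim : ∀ t ∈ Icc 0 T, Tendsto (F · t) atTop (𝓝 (f t)))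
    (hF'lim : ∀ t ∈ Icc 0 T, Tendsto (F' · t) atTop (𝓝 (f' t))) {t : ℝ} (ht : t ∈ Icc 0 T) :
    HasDerivWithinAt f (f' t) (Icc 0 T) t := by
  have hintegral : ∀ u ∈ Icc 0 T, f u = (∫ v in (0 : ℝ)..u, f' v) + f 0 := fun u hu => by
    have hsub : uIoc 0 u ⊆ Icc 0 T := by
      rw [uIoc_of_le hu.1]; exact Ioc_subset_Icc_self.trans (Icc_subset_Icc_right hu.2)
    have hdom : Tendsto (fun N => ∫ v in (0 : ℝ)..u, F' N v) atTop
        (𝓝 (∫ v in (0 : ℝ)..u, f' v)) := by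
      refine intervalIntegral.tendsto_integral_filter_of_dominated_convergence (fun _ => C)
        (Eventually.of_forall fun N =>
          ((hF'c N).mono hsub).aestronglyMeasurable measurableSet_uIoc)
        (Eventually.of_forall fun N => Eventually.of_forall fun v hv => hF'b N v (hsub hv))
        intervalIntegrable_const (Eventually.of_forall fun v hv => hF'lim v (hsub hv))
    simp_rw [integral_eq_sub_of_hasDerivWithinAt_Icc (hF _) (hF'c _) hu] at hdom
    exact sub_eq_iff_eq_add.1 (tendsto_nhds_unique
      ((hFlim u hu).sub (hFlim 0 ⟨le_rfl, hu.1.trans hu.2⟩)) hdom)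
  exact ((hasDerivWithinAt_intervalIntegral_of_continuousOn hf'c ht).add_const (f 0)).congr_of_mem
    hintegral ht

end RealAnalysis

lemma exists_hasDerivWithinAt_of_contDiff_of_hasCompactSupport {E : Type*} [NormedAddCommGroup E]
    [NormedSpace ℝ E] [CompleteSpace E] {F : E → E} (hF : ContDiff ℝ 1 F)
    (hsupp : HasCompactSupport F) (x₀ : E) {T : ℝ} (hT : 0 ≤ T) :
    ∃ α : ℝ → E, α 0 = x₀ ∧ ∀ t ∈ Icc 0 T, HasDerivWithinAt α (F (α t)) (Icc 0 T) t := by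
  obtain ⟨K, hK⟩ := hF.lipschitzWith_of_hasCompactSupport hsupp one_ne_zero
  obtain ⟨C, hC⟩ := hsupp.exists_bound_of_continuous hF.continuous
  have hC0 : 0 ≤ C := (norm_nonneg _).trans (hC 0)
  have hPL : IsPicardLindelof (fun _ => F) (tmin := 0) (tmax := T) ⟨0, le_rfl, hT⟩ x₀
      ⟨C * T, mul_nonneg hC0 hT⟩ 0 ⟨C, hC0⟩ K :=
    { lipschitzOnWith := fun _ _ => hK.lipschitzOnWith
      continuousOn := fun _ _ => continuousOn_const
      norm_le := fun _ _ x _ => hC x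
      mul_max_le := show C * max (T - 0) (0 - 0) ≤ C * T - 0 by simp [hT] }
  exact hPL.exists_eq_forall_mem_Icc_hasDerivWithinAt₀

/- Cutting the field off outside a ball keeps it dissipative, so the norm of the solution of the
truncated equation does not increase and the cutoff is never felt. -/
lemma exists_hasDerivWithinAt_of_inner_nonpos {E : Type*} [NormedAddCommGroup E]
    [InnerProductSpace ℝ E] [FiniteDimensional ℝ E] {F : E → E} (hF : ContDiff ℝ 1 F)
    (hF0 : ∀ x, inner ℝ x (F x) ≤ 0) (x₀ : E) {T : ℝ} (hT : 0 ≤ T) :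
    ∃ α : ℝ → E, α 0 = x₀ ∧ ∀ t ∈ Icc 0 T, HasDerivWithinAt α (F (α t)) (Icc 0 T) t := by
  let χ : ContDiffBump (0 : E) :=
    ⟨‖x₀‖ + 1, ‖x₀‖ + 2, by positivity, by linarith⟩
  obtain ⟨α, hα0, hα⟩ := exists_hasDerivWithinAt_of_contDiff_of_hasCompactSupport
    (χ.contDiff.smul hF) χ.hasCompactSupport.smul_right x₀ hT
  have hnorm : ∀ t ∈ Icc 0 T, ‖α t‖ ^ 2 ≤ ‖x₀‖ ^ 2 := fun t ht => by
    refine hα0 ▸ le_of_hasDerivWithinAt_nonpos (fun u hu => (hα u hu).norm_sq) (fun u _ => ?_) ht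
    have h := mul_nonpos_of_nonneg_of_nonpos (χ.nonneg (x := α u)) (hF0 (α u))
    simp only [Pi.smul_apply', inner_smul_right]
    linarith
  refine ⟨α, hα0, fun t ht => ?_⟩
  have hone : χ (α t) = 1 := χ.one_of_mem_closedBall <| mem_closedBall_zero_iff.2 <|
    (pow_le_pow_iff_left₀ (norm_nonneg _) (norm_nonneg _) two_ne_zero).1 (hnorm t ht) |>.trans
      (le_add_of_nonneg_right zero_le_one)
  simpa only [Pi.smul_apply', hone, one_smul] using hα t ht

section Summability

lemma summable_of_succ_le_mul_add {r h : ℕ → ℝ} {θ : ℝ} (hθ : θ < 1) (hr : ∀ n, 0 ≤ r n)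
    (hh : Summable h) (hh0 : ∀ n, 0 ≤ h n) (hrec : ∀ n, r (n + 1) ≤ θ * r n + h n) :
    Summable r := by
  have hpartial : ∀ m, (1 - θ) * ∑ k ∈ Finset.range m, r k + r m
      ≤ r 0 + ∑ k ∈ Finset.range m, h k := fun m => by
    induction m with
    | zero => simp
    | succ m ih => rw [Finset.sum_range_succ, Finset.sum_range_succ]; linarith [hrec m]
  refine summable_of_sum_range_le hr (c := (r 0 + ∑' k, h k) / (1 - θ)) fun m => ?_
  rw [le_div_iff₀ (sub_pos.2 hθ)]
  linarith [hpartial m, hr m, hh.sum_le_tsum (Finset.range m) fun k _ => hh0 k]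

lemma exists_summable_majorant_of_succ_le {h : ℕ → ℝ} {θ Q : ℝ} (hθ0 : 0 ≤ θ) (hθ : θ < 1)
    (hh : Summable h) (hh0 : ∀ n, 0 ≤ h n) (hQ : 0 ≤ Q) (M : ℕ) :
    ∃ q : ℕ → ℝ, Summable q ∧ ∀ r : ℕ → ℝ, (∀ n ≤ M, r n ≤ Q) →
      (∀ n, M ≤ n → r (n + 1) ≤ θ * r n + h n) → ∀ n, r n ≤ q n := by
  let h' : ℕ → ℝ := fun n => h n + if n < M then Q else 0
  have hh' : Summable h' := hh.add <| summable_of_hasFiniteSupport <|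
    (finite_lt_nat M).subset fun n hn => by_contra fun hnM => hn (if_neg hnM)
  have hh'0 : ∀ n, 0 ≤ h' n := fun n => add_nonneg (hh0 n) (by split_ifs <;> simp [hQ])
  let q : ℕ → ℝ := Nat.rec Q fun n qn => θ * qn + h' n
  have hq0 : ∀ n, 0 ≤ q n := fun n => by
    induction n with
    | zero => exact hQ
    | succ n ih => exact add_nonneg (mul_nonneg hθ0 ih) (hh'0 n)
  refine ⟨q, summable_of_succ_le_mul_add hθ hq0 hh' hh'0 fun n => le_rfl, fun r hrQ hrec n => ?_⟩
  induction n with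
  | zero => exact hrQ 0 M.zero_le
  | succ n ih =>
    have hqsucc : q (n + 1) = θ * q n + (h n + if n < M then Q else 0) := rfl
    rw [hqsucc]
    rcases lt_or_ge n M with hnM | hMn
    · rw [if_pos hnM]
      linarith [hrQ (n + 1) hnM, mul_nonneg hθ0 (hq0 n), hh0 n]
    · rw [if_neg hMn.not_gt]
      linarith [hrec n hMn, mul_le_mul_of_nonneg_left ih hθ0]

lemma summable_tsum_geometric_mul_shift {y : ℕ → ℝ} {r : ℝ} (hy : Summable y) (hy0 : ∀ n, 0 ≤ y n)
    (hr0 : 0 ≤ r) (hr : r < 1) : Summable fun n => ∑' m, r ^ m * y (n + m) := by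
  have hnonneg : ∀ p : ℕ × ℕ, 0 ≤ r ^ p.1 * y (p.2 + p.1) := fun p =>
    mul_nonneg (pow_nonneg hr0 _) (hy0 _)
  have hshift : ∀ m, Summable fun n => y (n + m) := fun m => (summable_nat_add_iff m).2 hy
  have hprod : Summable fun p : ℕ × ℕ => r ^ p.1 * y (p.2 + p.1) := by
    refine (summable_prod_of_nonneg hnonneg).2
      ⟨fun m => (hshift m).mul_left (r ^ m), ?_⟩
    refine Summable.of_nonneg_of_le
      (fun m => tsum_nonneg fun n => hnonneg (m, n)) (fun m => ?_)
      ((summable_geometric_of_lt_one hr0 hr).mul_right (∑' n, y n))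
    simp only [tsum_mul_left]
    refine mul_le_mul_of_nonneg_left ?_ (pow_nonneg hr0 m)
    rw [← hy.sum_add_tsum_nat_add m]
    exact le_add_of_nonneg_left (Finset.sum_nonneg fun n _ => hy0 n)
  exact hprod.prod_symm.prod

lemma exists_forall_le_add_of_eventually_le {u v : ℕ → ℝ} (h : ∀ᶠ n in atTop, u n ≤ v n) :
    ∃ K, 0 ≤ K ∧ ∀ n, u n ≤ v n + K := by
  obtain ⟨N, hN⟩ := eventually_atTop.1 h
  refine ⟨∑ n ∈ Finset.range N, |u n - v n|, Finset.sum_nonneg fun n _ => abs_nonneg _,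
    fun n => ?_⟩
  have hsum := Finset.sum_nonneg fun n (_ : n ∈ Finset.range N) => abs_nonneg (u n - v n)
  rcases lt_or_ge n N with hn | hn
  · have := Finset.single_le_sum (f := fun n => |u n - v n|) (fun n _ => abs_nonneg _)
      (Finset.mem_range.2 hn)
    linarith [le_abs_self (u n - v n)]
  · linarith [hN n hn]

end Summability

/-- `D` is an envelope for the tail energies of a dyadic solution: `D n ^ 2` stands for the largest
energy carried by the shells beyond `n`, `A n ^ 2` for its initial value, and `γ` for the ratio of
transport to dissipation. -/
structure IsTailEnvelope (γ A D : ℕ → ℝ) : Prop where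
  nonneg : ∀ n, 0 ≤ D n
  antitone : Antitone D
  zero_le : D 0 ≤ A 0
  sq_succ_le : ∀ n, D (n + 1) ^ 2 ≤ A (n + 1) ^ 2 + γ n * D (n + 1) * (D n ^ 2 - D (n + 1) ^ 2)

namespace IsTailEnvelope

variable {γ A D : ℕ → ℝ} {n : ℕ} {ε : ℝ}

lemma succ_le (h : IsTailEnvelope γ A D) (hγ : 0 ≤ γ n) (hA : 0 ≤ A (n + 1)) :
    D (n + 1) ≤ A (n + 1) + γ n * D n ^ 2 := by
  have hD := h.nonneg (n + 1)
  by_contra! hlt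
  have hgain : γ n * D (n + 1) * (D n ^ 2 - D (n + 1) ^ 2) ≤ D (n + 1) * (γ n * D n ^ 2) := by
    nlinarith [mul_nonneg (mul_nonneg hγ hD) (sq_nonneg (D (n + 1)))]
  nlinarith [h.sq_succ_le n, mul_nonneg hγ (sq_nonneg (D n))]

lemma inv_mul_le_sub_succ (h : IsTailEnvelope γ A D) (hγ : ∀ n, 0 < γ n) (hA : 0 ≤ A (n + 1))
    (hε0 : 0 < ε) (hε : ε ≤ 1 / 2) (hAε : γ (n + 1) * A (n + 1) ≤ ε / 2)
    (hn : ε < γ n * D n) (hn' : ε < γ (n + 1) * D (n + 1)) :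
    ε / 2 * (γ n)⁻¹ ≤ D n - D (n + 1) := by
  have hD' : 0 < D (n + 1) := pos_of_mul_pos_right (hε0.trans hn') (hγ _).le
  have hA_le : A (n + 1) ≤ D (n + 1) / 2 := le_of_mul_le_mul_left (by linarith) (hγ (n + 1))
  have hgain : 3 / 4 * D (n + 1) ≤ γ n * (D n ^ 2 - D (n + 1) ^ 2) := by
    refine le_of_mul_le_mul_left ?_ hD'
    nlinarith [h.sq_succ_le n, pow_le_pow_left₀ hA hA_le 2]
  rw [← div_eq_mul_inv, div_le_iff₀' (hγ n)]
  rcases le_total (D n / 2) (D (n + 1)) with hhalf | hhalf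
  · have hdrop : 0 ≤ γ n * (D n - D (n + 1)) :=
      mul_nonneg (hγ n).le (sub_nonneg.2 (h.antitone n.le_succ))
    have : 1 / 4 ≤ γ n * (D n - D (n + 1)) := by
      refine le_of_mul_le_mul_right ?_ (mul_pos three_pos hD')
      nlinarith
    linarith
  · nlinarith [hγ n]

/- As long as `γ n * D n` stays above `ε`, each step costs `D` at least `ε / (2 γ n)`; the total
cost is infinite while `D` starts below `A 0`. -/
lemma exists_forall_exists_mul_le (hγ : ∀ n, 0 < γ n) (hdiv : ¬Summable fun n => (γ n)⁻¹)
    (hA : ∀ n, 0 ≤ A n) (hε0 : 0 < ε) (hε : ε ≤ 1 / 2) {N : ℕ}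
    (hAε : ∀ n, N ≤ n → γ n * A n ≤ ε / 2) :
    ∃ M, ∀ D, IsTailEnvelope γ A D → ∃ n ≤ M, N ≤ n ∧ γ n * D n ≤ ε := by
  have hsum : Tendsto (fun L => ∑ k ∈ Finset.range L, (γ (k + N))⁻¹) atTop atTop :=
    (not_summable_iff_tendsto_nat_atTop_of_nonneg fun k => (inv_pos.2 (hγ _)).le).1
      fun h => hdiv ((summable_nat_add_iff N).1 h)
  obtain ⟨L, hL⟩ := (hsum.eventually_gt_atTop (A 0 / (ε / 2))).exists
  rw [div_lt_iff₀' (half_pos hε0)] at hL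
  refine ⟨L + N, fun D h => ?_⟩
  by_contra! hlarge
  have hcost : ∀ l ≤ L, ε / 2 * ∑ k ∈ Finset.range l, (γ (k + N))⁻¹ ≤ D N - D (l + N) := by
    intro l hl
    induction l with
    | zero => simp
    | succ l ih =>
      have hstep := h.inv_mul_le_sub_succ hγ (hA (l + N + 1)) hε0 hε (hAε (l + N + 1) (by omega))
        (hlarge (l + N) (by omega) (by omega)) (hlarge (l + N + 1) (by omega) (by omega))
      rw [Finset.sum_range_succ, mul_add, add_right_comm l 1 N]
      linarith [ih (by omega)]
  linarith [hcost L le_rfl, h.nonneg (L + N), h.antitone N.zero_le, h.zero_le]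

lemma mul_le_of_le (h : IsTailEnvelope γ A D) (hγ : ∀ n, 0 < γ n) (hA : ∀ n, 0 ≤ A n)
    {c : ℝ} (hc : 0 ≤ c) (hcε : c * ε ≤ 1 / 2) {N m : ℕ} (hγc : ∀ n, N ≤ n → γ (n + 1) ≤ c * γ n)
    (hAε : ∀ n, N ≤ n → γ n * A n ≤ ε / 2) (hNm : N ≤ m) (hm : γ m * D m ≤ ε) (hmn : m ≤ n) :
    γ n * D n ≤ ε := by
  induction n, hmn using Nat.le_induction with
  | base => exact hm
  | succ n hmn ih =>
    have hNn : N ≤ n := hNm.trans hmn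
    have hγD := mul_nonneg (hγ n).le (h.nonneg n)
    have : 0 ≤ ε := hγD.trans ih
    calc γ (n + 1) * D (n + 1) ≤ γ (n + 1) * (A (n + 1) + γ n * D n ^ 2) :=
          mul_le_mul_of_nonneg_left (h.succ_le (hγ n).le (hA _)) (hγ _).le
      _ = γ (n + 1) * A (n + 1) + γ (n + 1) * (γ n * D n ^ 2) := mul_add ..
      _ ≤ ε / 2 + c * γ n * (γ n * D n ^ 2) := add_le_add (hAε _ (by omega))
          (mul_le_mul_of_nonneg_right (hγc n hNn) (mul_nonneg (hγ n).le (sq_nonneg _)))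
      _ = ε / 2 + c * (γ n * D n) ^ 2 := by ring
      _ ≤ ε / 2 + c * ε ^ 2 := by gcongr
      _ ≤ ε := by nlinarith

lemma sq_pow_succ_mul_le (h : IsTailEnvelope γ A D) (hγ : 0 ≤ γ n) (hA : 0 ≤ A (n + 1))
    {ρ : ℝ} (hρ : 0 ≤ ρ) (hρε : ρ * ε ≤ 1 / 2) (hn : γ n * D n ≤ ε) :
    (ρ ^ (n + 1) * D (n + 1)) ^ 2
      ≤ 1 / 2 * (ρ ^ n * D n) ^ 2 + 2 * (ρ ^ (n + 1) * A (n + 1)) ^ 2 := by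
  have hD := h.nonneg n
  have hlin : ρ ^ (n + 1) * D (n + 1) ≤ ρ ^ (n + 1) * A (n + 1) + ρ ^ n * D n / 2 := by
    calc ρ ^ (n + 1) * D (n + 1) ≤ ρ ^ (n + 1) * (A (n + 1) + γ n * D n ^ 2) :=
          mul_le_mul_of_nonneg_left (h.succ_le hγ hA) (by positivity)
      _ = ρ ^ (n + 1) * A (n + 1) + ρ * (γ n * D n) * (ρ ^ n * D n) := by ring
      _ ≤ ρ ^ (n + 1) * A (n + 1) + ρ * ε * (ρ ^ n * D n) := by gcongr
      _ ≤ ρ ^ (n + 1) * A (n + 1) + 1 / 2 * (ρ ^ n * D n) := by gcongr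
      _ = _ := by ring
  have hsq := pow_le_pow_left₀ (mul_nonneg (pow_nonneg hρ _) (h.nonneg _)) hlin 2
  nlinarith [sq_nonneg (ρ ^ (n + 1) * A (n + 1) - ρ ^ n * D n / 2)]

lemma exists_summable_forall_sq_le {ρ c : ℝ} (hρ : 1 < ρ) (hγ : ∀ n, 0 < γ n)
    (hγρ : Tendsto (fun n => γ n / ρ ^ n) atTop (𝓝 0)) (hγc : ∀ᶠ n in atTop, γ (n + 1) ≤ c * γ n)
    (hdiv : ¬Summable fun n => (γ n)⁻¹) (hA : ∀ n, 0 ≤ A n)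
    (hAρ : Summable fun n => (ρ ^ n * A n) ^ 2) :
    ∃ q : ℕ → ℝ, Summable q ∧ ∀ D, IsTailEnvelope γ A D → ∀ n, (ρ ^ n * D n) ^ 2 ≤ q n := by
  have hρ0 : 0 < ρ := one_pos.trans hρ
  let C := max c ρ
  have hC : 1 < C := hρ.trans_le (le_max_right c ρ)
  let ε := 1 / (2 * C)
  have hε0 : 0 < ε := by positivity
  have hCε : C * ε = 1 / 2 := by simp only [ε]; field_simp
  have hρε : ρ * ε ≤ 1 / 2 := hCε ▸ mul_le_mul_of_nonneg_right (le_max_right c ρ) hε0.le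
  have hε : ε ≤ 1 / 2 := by nlinarith
  have hγA : Tendsto (fun n => γ n * A n) atTop (𝓝 0) := by
    have hρA : Tendsto (fun n => ρ ^ n * A n) atTop (𝓝 0) := by
      simpa [Real.sqrt_sq (mul_nonneg (pow_nonneg hρ0.le _) (hA _))]
        using hAρ.tendsto_atTop_zero.sqrt
    refine (mul_zero (0 : ℝ) ▸ hγρ.mul hρA).congr fun n => ?_
    field_simp
  obtain ⟨N, hN⟩ := eventually_atTop.1
    ((hγA.eventually_le_const (half_pos hε0)).and hγc)
  have hAε : ∀ n, N ≤ n → γ n * A n ≤ ε / 2 := fun n hn => (hN n hn).1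
  have hγC : ∀ n, N ≤ n → γ (n + 1) ≤ C * γ n := fun n hn =>
    (hN n hn).2.trans (mul_le_mul_of_nonneg_right (le_max_left c ρ) (hγ n).le)
  obtain ⟨M, hM⟩ := exists_forall_exists_mul_le hγ hdiv hA hε0 hε hAε
  obtain ⟨q, hq, hqle⟩ := exists_summable_majorant_of_succ_le (θ := 1 / 2) (by norm_num)
    (by norm_num) (((summable_nat_add_iff 1).2 hAρ).mul_left 2)
    (fun n => mul_nonneg zero_le_two (sq_nonneg _)) (sq_nonneg (ρ ^ M * A 0)) M
  refine ⟨q, hq, fun D h => hqle _ (fun n hn => ?_) fun n hn => ?_⟩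
  · have hD0 : D n ≤ A 0 := (h.antitone n.zero_le).trans h.zero_le
    have := h.nonneg n
    gcongr
    exact hρ.le
  · obtain ⟨m, hmM, hNm, hm⟩ := hM D h
    exact h.sq_pow_succ_mul_le (hγ n).le (hA _) hρ0.le hρε
      (h.mul_le_of_le hγ hA (zero_le_one.trans hC.le) hCε.le hγC hAε hNm hm (hmM.trans hn))

end IsTailEnvelope

lemma summable_sq_pow_mul_sqrt_tsum_shift {x : ℕ → ℝ} {ρ : ℝ} (hρ : 1 < ρ)
    (hx : Summable fun n => (ρ ^ n * x n) ^ 2) :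
    Summable fun n => (ρ ^ n * √(∑' m, x (n + m) ^ 2)) ^ 2 := by
  have : 0 < ρ := one_pos.trans hρ
  refine (summable_tsum_geometric_mul_shift hx (fun n => sq_nonneg _) (r := (ρ ^ 2)⁻¹)
    (by positivity) (inv_lt_one_of_one_lt₀ (one_lt_pow₀ hρ two_ne_zero))).congr fun n => ?_
  rw [mul_pow, Real.sq_sqrt (tsum_nonneg fun m => sq_nonneg _), ← tsum_mul_left]
  refine tsum_congr fun m => ?_
  rw [pow_add, inv_pow, ← pow_mul, mul_comm 2 m, pow_mul]
  field_simp

lemma sum_Ico_le_sq_sqrt_tsum_shift {x : ℕ → ℝ} (hx : Summable fun n => x n ^ 2) (m N : ℕ) :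
    ∑ k ∈ Finset.Ico m N, x k ^ 2 ≤ √(∑' k, x (m + k) ^ 2) ^ 2 := by
  rw [Real.sq_sqrt (tsum_nonneg fun k => sq_nonneg _), Finset.sum_Ico_eq_sum_range]
  refine Summable.sum_le_tsum _ (fun k _ => sq_nonneg _) ?_
  simpa only [add_comm m] using (summable_nat_add_iff m).2 hx

/-- The right-hand side of the dyadic system with transport coefficients `b` and damping rates `ν`,
evaluated on the state `X`; only the shells `n ≥ 1` are meaningful. -/
def dyadicField (b ν X : ℕ → ℝ) (n : ℕ) : ℝ :=
  b (n - 1) * X (n - 1) ^ 2 - b n * X n * X (n + 1) - ν n * X n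

/-- The rate at which energy passes from shell `n` to shell `n + 1` (for the energy `X n ^ 2 / 2`
of shell `n`). -/
def energyFlux (b X : ℕ → ℝ) (n : ℕ) : ℝ :=
  b n * X n ^ 2 * X (n + 1)

/-- `X` solves the first `N` equations of the dyadic system on `[0, T]` with initial state `x`; the
shells beyond `N` are arbitrary continuous functions. -/
structure SolvesUpTo (b ν x : ℕ → ℝ) (N : ℕ) (T : ℝ) (X : ℕ → ℝ → ℝ) : Prop where
  zero : ∀ t, X 0 t = 0
  init : ∀ n, 1 ≤ n → n ≤ N → X n 0 = x n
  continuousOn : ∀ n, ContinuousOn (X n) (Icc 0 T)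
  hasDeriv : ∀ n, 1 ≤ n → n ≤ N → ∀ t ∈ Icc 0 T,
    HasDerivWithinAt (X n) (dyadicField b ν (X · t) n) (Icc 0 T) t

/-- `X` is the Galerkin approximation with `N` shells: all shells beyond `N` vanish. -/
structure IsGalerkin (b ν x : ℕ → ℝ) (N : ℕ) (T : ℝ) (X : ℕ → ℝ → ℝ) : Prop
    extends SolvesUpTo b ν x N T X where
  eq_zero : ∀ n, N < n → ∀ t, X n t = 0

section Galerkin

variable {b ν x : ℕ → ℝ} {N : ℕ} {T : ℝ} {X : ℕ → ℝ → ℝ}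

lemma mul_dyadicField_succ (b ν X : ℕ → ℝ) (n : ℕ) : X (n + 1) * dyadicField b ν X (n + 1) =
    energyFlux b X n - energyFlux b X (n + 1) - ν (n + 1) * X (n + 1) ^ 2 := by
  simp only [dyadicField, energyFlux, Nat.add_sub_cancel]
  ring

lemma sum_mul_dyadicField_nonpos {X : ℕ → ℝ} (hν : ∀ n, 0 ≤ ν (n + 1)) (h0 : X 0 = 0)
    (hN : X (N + 1) = 0) : ∑ n ∈ Finset.range N, X (n + 1) * dyadicField b ν X (n + 1) ≤ 0 := by
  simp_rw [mul_dyadicField_succ]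
  rw [Finset.sum_sub_distrib, Finset.sum_range_sub']
  have := Finset.sum_nonneg fun n (_ : n ∈ Finset.range N) =>
    mul_nonneg (hν n) (sq_nonneg (X (n + 1)))
  simpa [energyFlux, h0, hN] using this

/-- The state of the dyadic system whose shells `1, …, N` are the coordinates of `v` and whose other
shells vanish. -/
def zeroExtend {N : ℕ} (v : EuclideanSpace ℝ (Fin N)) : ℕ → ℝ
  | 0 => 0
  | n + 1 => if h : n < N then v ⟨n, h⟩ else 0

lemma zeroExtend_succ (v : EuclideanSpace ℝ (Fin N)) (i : Fin N) :
    zeroExtend v (i + 1) = v i := dif_pos i.2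

lemma zeroExtend_eq_zero (v : EuclideanSpace ℝ (Fin N)) {n : ℕ} (hn : N < n) :
    zeroExtend v n = 0 := by
  obtain ⟨m, rfl⟩ := Nat.exists_eq_add_of_lt (Nat.zero_lt_of_lt hn)
  exact dif_neg (by omega)

lemma contDiff_zeroExtend (n : ℕ) :
    ContDiff ℝ 1 fun v : EuclideanSpace ℝ (Fin N) => zeroExtend v n := by
  cases n with
  | zero => exact contDiff_const
  | succ n => simp only [zeroExtend]; split_ifs <;> fun_prop

lemma exists_isGalerkin (b x : ℕ → ℝ) (hν : ∀ n, 0 ≤ ν (n + 1)) (N : ℕ) (hT : 0 ≤ T) :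
    ∃ X, IsGalerkin b ν x N T X := by
  let F : EuclideanSpace ℝ (Fin N) → EuclideanSpace ℝ (Fin N) := fun v =>
    WithLp.toLp 2 fun i => dyadicField b ν (zeroExtend v) (i + 1)
  have hF : ContDiff ℝ 1 F := by
    refine contDiff_euclidean.2 fun i => ?_
    have := fun n => contDiff_zeroExtend (N := N) n
    simp only [F, dyadicField]
    fun_prop
  have hF0 : ∀ v, inner ℝ v (F v) ≤ 0 := fun v => by
    have hsum : inner ℝ v (F v) = ∑ n ∈ Finset.range N,
        zeroExtend v (n + 1) * dyadicField b ν (zeroExtend v) (n + 1) := by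
      rw [← Fin.sum_univ_eq_sum_range fun n =>
        zeroExtend v (n + 1) * dyadicField b ν (zeroExtend v) (n + 1), PiLp.inner_apply]
      exact Finset.sum_congr rfl fun i _ => by rw [zeroExtend_succ]; exact mul_comm _ _
    exact hsum ▸ sum_mul_dyadicField_nonpos hν rfl (zeroExtend_eq_zero v N.lt_succ_self)
  obtain ⟨α, hα0, hα⟩ := exists_hasDerivWithinAt_of_inner_nonpos hF hF0
    (WithLp.toLp 2 fun i => x (i + 1)) hT
  refine ⟨fun n t => zeroExtend (α t) n,
    { zero := fun t => rfl
      eq_zero := fun n hn t => zeroExtend_eq_zero _ hn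
      continuousOn := fun n => (contDiff_zeroExtend n).continuous.comp_continuousOn
        fun t ht => (hα t ht).continuousWithinAt
      init := ?_
      hasDeriv := ?_ }⟩
  · rintro (_ | n) hn1 hnN
    · omega
    · simpa only [hα0] using zeroExtend_succ (α 0) ⟨n, hnN⟩
  · rintro (_ | n) hn1 hnN t ht
    · omega
    · have hcoord : HasDerivWithinAt (fun t => α t ⟨n, hnN⟩) (F (α t) ⟨n, hnN⟩) (Icc 0 T) t := by
        simpa using
          (hasFDerivWithinAt_euclidean.1 (hα t ht).hasFDerivWithinAt ⟨n, hnN⟩).hasDerivWithinAt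
      simpa only [zeroExtend_succ _ (⟨n, hnN⟩ : Fin N)] using hcoord

/-- The energy of the shells `m + 1, …, N` at time `t`, together with the energy these shells have
dissipated up to time `t`. -/
noncomputable def tailEnergy (ν : ℕ → ℝ) (X : ℕ → ℝ → ℝ) (N m : ℕ) (t : ℝ) : ℝ :=
  ∑ k ∈ Finset.Ico m N, (X (k + 1) t ^ 2 + 2 * ∫ u in (0 : ℝ)..t, ν (k + 1) * X (k + 1) u ^ 2)

lemma SolvesUpTo.continuousOn_dissipation (h : SolvesUpTo b ν x N T X) (n : ℕ) :
    ContinuousOn (fun u => ν n * X n u ^ 2) (Icc 0 T) :=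
  continuousOn_const.mul ((h.continuousOn n).pow 2)

lemma integral_dissipation_nonneg {n : ℕ} (hν : 0 ≤ ν n) {t : ℝ} (ht : 0 ≤ t) :
    0 ≤ ∫ u in (0 : ℝ)..t, ν n * X n u ^ 2 :=
  intervalIntegral.integral_nonneg ht fun _ _ => mul_nonneg hν (sq_nonneg _)

lemma SolvesUpTo.hasDerivWithinAt_sq_add_dissipation (h : SolvesUpTo b ν x N T X) {n : ℕ}
    (hn : n < N) {t : ℝ} (ht : t ∈ Icc 0 T) :
    HasDerivWithinAt (fun t => X (n + 1) t ^ 2 + 2 * ∫ u in (0 : ℝ)..t, ν (n + 1) * X (n + 1) u ^ 2)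
      (2 * (energyFlux b (X · t) n - energyFlux b (X · t) (n + 1))) (Icc 0 T) t := by
  refine (((h.hasDeriv (n + 1) (by omega) hn t ht).fun_pow 2).fun_add
    ((hasDerivWithinAt_intervalIntegral_of_continuousOn (h.continuousOn_dissipation (n + 1)) ht
      ).const_mul 2)).congr_deriv ?_
  have := mul_dyadicField_succ b ν (X · t) n
  push_cast
  linear_combination 2 * this

namespace IsGalerkin

lemma tailEnergy_eq (h : IsGalerkin b ν x N T X) (m : ℕ) (t : ℝ) :
    tailEnergy ν X N m t = X (m + 1) t ^ 2 + 2 * (∫ u in (0 : ℝ)..t, ν (m + 1) * X (m + 1) u ^ 2)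
      + tailEnergy ν X N (m + 1) t := by
  rcases lt_or_ge m N with hm | hm
  · exact Finset.sum_eq_sum_Ico_succ_bot hm _
  · simp [tailEnergy, h.eq_zero (m + 1) (by omega), hm, hm.trans m.le_succ]

lemma hasDerivWithinAt_tailEnergy (h : IsGalerkin b ν x N T X) (m : ℕ) {t : ℝ}
    (ht : t ∈ Icc 0 T) :
    HasDerivWithinAt (tailEnergy ν X N m) (2 * energyFlux b (X · t) m) (Icc 0 T) t := by
  rcases le_total N m with hm | hm
  · have hzero : tailEnergy ν X N m = fun _ => 0 := by ext u; simp [tailEnergy, hm]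
    simpa [hzero, energyFlux, h.eq_zero (m + 1) (by omega)] using hasDerivWithinAt_const ..
  · induction hm using Nat.decreasingInduction with
    | self =>
      have hzero : tailEnergy ν X N N = fun _ => 0 := by ext u; simp [tailEnergy]
      simpa [hzero, energyFlux, h.eq_zero (N + 1) (by omega)] using hasDerivWithinAt_const ..
    | of_succ m hm ih =>
      rw [show tailEnergy ν X N m = _ from funext (h.tailEnergy_eq m)]
      exact ((h.hasDerivWithinAt_sq_add_dissipation hm ht).fun_add ih).congr_deriv (by ring)

lemma tailEnergy_nonneg (hν : ∀ n, 0 ≤ ν (n + 1)) (m : ℕ) {t : ℝ} (ht : 0 ≤ t) :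
    0 ≤ tailEnergy ν X N m t :=
  Finset.sum_nonneg fun k _ =>
    add_nonneg (sq_nonneg _) (mul_nonneg zero_le_two (integral_dissipation_nonneg (hν k) ht))

lemma tailEnergy_zero (h : IsGalerkin b ν x N T X) (m : ℕ) :
    tailEnergy ν X N m 0 = ∑ k ∈ Finset.Ico m N, x (k + 1) ^ 2 := by
  refine Finset.sum_congr rfl fun k hk => ?_
  rw [h.init (k + 1) (by omega) (Finset.mem_Ico.1 hk).2]
  simp

lemma sq_le_tailEnergy (h : IsGalerkin b ν x N T X) (hν : ∀ n, 0 ≤ ν (n + 1)) (m : ℕ) {t : ℝ}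
    (ht : 0 ≤ t) : X (m + 1) t ^ 2 ≤ tailEnergy ν X N m t := by
  rw [h.tailEnergy_eq m t]
  linarith [integral_dissipation_nonneg (X := X) (hν m) ht,
    tailEnergy_nonneg (X := X) (N := N) hν (m + 1) ht]

lemma tailEnergy_succ_le (h : IsGalerkin b ν x N T X) (hν : ∀ n, 0 ≤ ν (n + 1)) (m : ℕ) {t : ℝ}
    (ht : 0 ≤ t) : tailEnergy ν X N (m + 1) t ≤ tailEnergy ν X N m t := by
  rw [h.tailEnergy_eq m t]
  linarith [integral_dissipation_nonneg (X := X) (hν m) ht, sq_nonneg (X (m + 1) t)]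

lemma tailEnergy_zero_le (h : IsGalerkin b ν x N T X) {t : ℝ} (ht : t ∈ Icc 0 T) :
    tailEnergy ν X N 0 t ≤ tailEnergy ν X N 0 0 :=
  le_of_hasDerivWithinAt_nonpos (fun _ hu => h.hasDerivWithinAt_tailEnergy 0 hu)
    (fun u _ => by simp [energyFlux, h.zero u]) ht

/- The flux into the shells beyond `m + 1` is at most `γ m * d` times the dissipation of shell
`m + 1`, and that dissipation is part of the drop from `tailEnergy m` to `tailEnergy (m + 1)`. -/
lemma tailEnergy_succ_le_add {γ : ℕ → ℝ} (h : IsGalerkin b ν x N T X) {m : ℕ} {d : ℝ}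
    (hγ : 0 ≤ γ m) (hb : |b (m + 1)| ≤ γ m * ν (m + 1))
    (hd : ∀ t ∈ Icc 0 T, |X (m + 2) t| ≤ d) {t : ℝ} (ht : t ∈ Icc 0 T) :
    tailEnergy ν X N (m + 1) t ≤ tailEnergy ν X N (m + 1) 0
      + γ m * d * (tailEnergy ν X N m t - tailEnergy ν X N (m + 1) t) := by
  have hd0 : 0 ≤ d := (abs_nonneg _).trans (hd t ht)
  have hdiss := h.continuousOn_dissipation (m + 1)
  have hderiv_nonpos : ∀ u ∈ Icc 0 T, 2 * energyFlux b (X · u) (m + 1)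
      - γ m * d * 2 * (ν (m + 1) * X (m + 1) u ^ 2) ≤ 0 := fun u hu => by
    have hflux : energyFlux b (X · u) (m + 1) ≤ γ m * ν (m + 1) * X (m + 1) u ^ 2 * d :=
      calc energyFlux b (X · u) (m + 1) ≤ |b (m + 1)| * X (m + 1) u ^ 2 * |X (m + 2) u| := by
            rw [← abs_sq (X (m + 1) u), ← abs_mul, ← abs_mul]; exact le_abs_self _
        _ ≤ γ m * ν (m + 1) * X (m + 1) u ^ 2 * d := by
            have := (abs_nonneg (b (m + 1))).trans hb
            gcongr
            exact hd u hu
    linarith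
  have hle := le_of_hasDerivWithinAt_nonpos (fun u hu =>
    (h.hasDerivWithinAt_tailEnergy (m + 1) hu).fun_sub
      ((hasDerivWithinAt_intervalIntegral_of_continuousOn hdiss hu).const_mul (γ m * d * 2)))
    hderiv_nonpos ht
  simp only [intervalIntegral.integral_same, mul_zero, sub_zero] at hle
  have hdrop : 2 * ∫ u in (0 : ℝ)..t, ν (m + 1) * X (m + 1) u ^ 2
      ≤ tailEnergy ν X N m t - tailEnergy ν X N (m + 1) t := by
    linarith [h.tailEnergy_eq m t, sq_nonneg (X (m + 1) t)]
  linarith [mul_le_mul_of_nonneg_left hdrop (mul_nonneg hγ hd0)]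

lemma exists_isTailEnvelope {γ A : ℕ → ℝ} (h : IsGalerkin b ν x N T X) (hT : 0 ≤ T)
    (hν : ∀ n, 0 ≤ ν (n + 1)) (hγ : ∀ n, 0 ≤ γ n) (hb : ∀ n, |b (n + 1)| ≤ γ n * ν (n + 1))
    (hA : 0 ≤ A 0) (hxA : ∀ m N, ∑ k ∈ Finset.Ico m N, x (k + 1) ^ 2 ≤ A m ^ 2) :
    ∃ D, IsTailEnvelope γ A D ∧ ∀ n, ∀ t ∈ Icc 0 T, |X (n + 1) t| ≤ D n := by
  have hmax : ∀ m, ∃ τ ∈ Icc 0 T, IsMaxOn (tailEnergy ν X N m) (Icc 0 T) τ := fun m =>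
    isCompact_Icc.exists_isMaxOn (nonempty_Icc.2 hT)
      fun t ht => (h.hasDerivWithinAt_tailEnergy m ht).continuousWithinAt
  choose τ hτ hτmax using hmax
  let D : ℕ → ℝ := fun m => √(tailEnergy ν X N m (τ m))
  have hD_sq : ∀ m, D m ^ 2 = tailEnergy ν X N m (τ m) := fun m =>
    Real.sq_sqrt (tailEnergy_nonneg hν m (hτ m).1)
  have hX_le : ∀ n, ∀ t ∈ Icc 0 T, |X (n + 1) t| ≤ D n := fun n t ht =>
    Real.abs_le_sqrt ((h.sq_le_tailEnergy hν n ht.1).trans (hτmax n ht))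
  have hinit : ∀ m, tailEnergy ν X N m 0 ≤ A m ^ 2 := fun m =>
    (h.tailEnergy_zero m).trans_le (hxA m N)
  refine ⟨D, ⟨fun m => Real.sqrt_nonneg _, antitone_nat_of_succ_le fun m => ?_, ?_, fun m => ?_⟩,
    hX_le⟩
  · exact Real.sqrt_le_sqrt ((h.tailEnergy_succ_le hν m (hτ (m + 1)).1).trans
      (hτmax m (hτ (m + 1))))
  · exact (Real.sqrt_le_left hA).2 ((h.tailEnergy_zero_le (hτ 0)).trans (hinit 0))
  · rw [hD_sq (m + 1), hD_sq m]
    refine (h.tailEnergy_succ_le_add (hγ m) (hb m) (hX_le (m + 1)) (hτ (m + 1))).trans ?_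
    refine add_le_add (hinit (m + 1)) (mul_le_mul_of_nonneg_left ?_
      (mul_nonneg (hγ m) (Real.sqrt_nonneg _)))
    exact sub_le_sub_right (hτmax m (hτ (m + 1))) _

end IsGalerkin

end Galerkin

section Stability

variable {b ν c x : ℕ → ℝ} {K T : ℝ} {N : ℕ}

/-- For states `X` with `|X n| ≤ c n`, the damping rates `ν`, raised by the constant `K`, absorb the
terms of the linearised transport around `X`. -/
def DissipationDominates (b ν c : ℕ → ℝ) (K : ℝ) : Prop :=
  ∀ n, |b n| * c n + |b (n + 1)| * (c (n + 1) + 2 * c (n + 2)) ≤ 2 * (ν (n + 1) + K)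

lemma sum_sub_mul_dyadicField_sub {X Y : ℕ → ℝ} (hX : X 0 = 0) (hY : Y 0 = 0) (N : ℕ) :
    ∑ n ∈ Finset.range N,
        (Y (n + 1) - X (n + 1)) * (dyadicField b ν Y (n + 1) - dyadicField b ν X (n + 1)) =
      ∑ n ∈ Finset.range N, (b n * X n * (Y n - X n) * (Y (n + 1) - X (n + 1))
        - b (n + 1) * X (n + 2) * (Y (n + 1) - X (n + 1)) ^ 2
        - ν (n + 1) * (Y (n + 1) - X (n + 1)) ^ 2)
      - b N * Y N * (Y N - X N) * (Y (N + 1) - X (N + 1)) := by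
  induction N with
  | zero => simp [hX, hY]
  | succ N ih =>
    rw [Finset.sum_range_succ, Finset.sum_range_succ, ih]
    simp only [dyadicField, Nat.add_sub_cancel]
    ring

lemma DissipationDominates.transport_le (h : DissipationDominates b ν c K) {X Z : ℕ → ℝ}
    (hX : ∀ n, |X n| ≤ c n) (n : ℕ) :
    b n * X n * Z n * Z (n + 1) - b (n + 1) * X (n + 2) * Z (n + 1) ^ 2 - ν (n + 1) * Z (n + 1) ^ 2
      ≤ |b n| * c n * Z n ^ 2 / 2 - |b (n + 1)| * c (n + 1) * Z (n + 1) ^ 2 / 2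
        + K * Z (n + 1) ^ 2 := by
  have hself : ∀ m k, |b m * X k| ≤ |b m| * c k := fun m k => by
    rw [abs_mul]; exact mul_le_mul_of_nonneg_left (hX k) (abs_nonneg _)
  have hbc : 0 ≤ |b n| * c n := (abs_nonneg _).trans (hself n n)
  have hcross : b n * X n * (Z n * Z (n + 1)) ≤ |b n| * c n * ((Z n ^ 2 + Z (n + 1) ^ 2) / 2) := by
    have hamgm : |Z n * Z (n + 1)| ≤ (Z n ^ 2 + Z (n + 1) ^ 2) / 2 :=
      abs_le.2 ⟨by nlinarith [sq_nonneg (Z n + Z (n + 1))],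
        by nlinarith [sq_nonneg (Z n - Z (n + 1))]⟩
    exact (le_abs_self _).trans (abs_mul (b n * X n) _ ▸
      mul_le_mul (hself n n) hamgm (abs_nonneg _) hbc)
  have hnext : -(|b (n + 1)| * c (n + 2)) * Z (n + 1) ^ 2
      ≤ b (n + 1) * X (n + 2) * Z (n + 1) ^ 2 :=
    mul_le_mul_of_nonneg_right (abs_le.1 (hself (n + 1) (n + 2))).1 (sq_nonneg _)
  have hdiss := mul_le_mul_of_nonneg_right (h n) (sq_nonneg (Z (n + 1)))
  linarith

lemma DissipationDominates.sum_sub_mul_dyadicField_sub_le (h : DissipationDominates b ν c K)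
    {X Y : ℕ → ℝ} (hX0 : X 0 = 0) (hY0 : Y 0 = 0) (hX : ∀ n, |X n| ≤ c n) (N : ℕ) :
    ∑ n ∈ Finset.range N,
        (Y (n + 1) - X (n + 1)) * (dyadicField b ν Y (n + 1) - dyadicField b ν X (n + 1)) ≤
      K * ∑ n ∈ Finset.range N, (Y (n + 1) - X (n + 1)) ^ 2
        + |b N| * (|Y N| * |Y N - X N| * |Y (N + 1) - X (N + 1)|) := by
  have hbulk := Finset.sum_le_sum fun n (_ : n ∈ Finset.range N) =>
    h.transport_le (Z := fun n => Y n - X n) hX n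
  rw [Finset.sum_add_distrib,
    Finset.sum_range_sub' fun n => |b n| * c n * (Y n - X n) ^ 2 / 2, ← Finset.mul_sum] at hbulk
  have hN : 0 ≤ |b N| * c N * (Y N - X N) ^ 2 / 2 := by
    have := (abs_nonneg _).trans (hX N)
    positivity
  have hboundary := neg_abs_le (b N * Y N * (Y N - X N) * (Y (N + 1) - X (N + 1)))
  simp only [abs_mul] at hboundary
  rw [sum_sub_mul_dyadicField_sub hX0 hY0]
  simp only [hX0, hY0, sub_self] at hbulk ⊢
  linarith

lemma mul_mul_le_sum_cubes {u v w : ℝ} (hu : 0 ≤ u) (hv : 0 ≤ v) (hw : 0 ≤ w) :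
    u * v * w ≤ (u ^ 3 + v ^ 3 + w ^ 3) / 3 := by
  nlinarith [mul_nonneg (add_nonneg (add_nonneg hu hv) hw)
    (add_nonneg (add_nonneg (sq_nonneg (u - v)) (sq_nonneg (v - w))) (sq_nonneg (w - u)))]

/-- The cubes of the shells `N` and `N + 1` of two solutions at time `t`; they control the
difference of the energy fluxes through shell `N`. -/
def boundaryCubes (X Y : ℕ → ℝ → ℝ) (N : ℕ) (t : ℝ) : ℝ :=
  |X N t| ^ 3 + |X (N + 1) t| ^ 3 + (|Y N t| ^ 3 + |Y (N + 1) t| ^ 3)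

lemma boundaryCubes_nonneg (X Y : ℕ → ℝ → ℝ) (N : ℕ) (t : ℝ) : 0 ≤ boundaryCubes X Y N t := by
  unfold boundaryCubes
  positivity

lemma continuousOn_boundaryCubes {X Y : ℕ → ℝ → ℝ} {s : Set ℝ} (hX : ∀ n, ContinuousOn (X n) s)
    (hY : ∀ n, ContinuousOn (Y n) s) (N : ℕ) : ContinuousOn (boundaryCubes X Y N) s := by
  unfold boundaryCubes
  fun_prop

lemma mul_abs_sub_mul_abs_sub_le_boundaryCubes (X Y : ℕ → ℝ → ℝ) (N : ℕ) (t : ℝ) :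
    |Y N t| * |Y N t - X N t| * |Y (N + 1) t - X (N + 1) t| ≤ 2 * boundaryCubes X Y N t := by
  have hx := abs_nonneg (X N t)
  have hx' := abs_nonneg (X (N + 1) t)
  have hy := abs_nonneg (Y N t)
  have hy' := abs_nonneg (Y (N + 1) t)
  calc |Y N t| * |Y N t - X N t| * |Y (N + 1) t - X (N + 1) t|
      ≤ |Y N t| * (|Y N t| + |X N t|) * (|Y (N + 1) t| + |X (N + 1) t|) := by
        gcongr <;> exact abs_sub _ _
    _ ≤ 2 * boundaryCubes X Y N t := by
        unfold boundaryCubes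
        linarith [mul_mul_le_sum_cubes hy hy hy', mul_mul_le_sum_cubes hy hy hx',
          mul_mul_le_sum_cubes hy hx hy', mul_mul_le_sum_cubes hy hx hx', pow_nonneg hx 3,
          pow_nonneg hx' 3, pow_nonneg hy' 3]

lemma SolvesUpTo.mono {X : ℕ → ℝ → ℝ} {N' : ℕ} {T' : ℝ} (h : SolvesUpTo b ν x N T X)
    (hN : N' ≤ N) (hT : T' ≤ T) : SolvesUpTo b ν x N' T' X where
  zero := h.zero
  init n hn hnN := h.init n hn (hnN.trans hN)
  continuousOn n := (h.continuousOn n).mono (Icc_subset_Icc_right hT)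
  hasDeriv n hn hnN t ht := (h.hasDeriv n hn (hnN.trans hN) t (Icc_subset_Icc_right hT ht)).mono
    (Icc_subset_Icc_right hT)

lemma SolvesUpTo.hasDerivWithinAt_sum_sq_sub {X Y : ℕ → ℝ → ℝ} (hX : SolvesUpTo b ν x N T X)
    (hY : SolvesUpTo b ν x N T Y) {t : ℝ} (ht : t ∈ Icc 0 T) :
    HasDerivWithinAt (fun t => ∑ n ∈ Finset.range N, (Y (n + 1) t - X (n + 1) t) ^ 2)
      (2 * ∑ n ∈ Finset.range N, (Y (n + 1) t - X (n + 1) t) *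
        (dyadicField b ν (Y · t) (n + 1) - dyadicField b ν (X · t) (n + 1))) (Icc 0 T) t := by
  rw [Finset.mul_sum]
  refine HasDerivWithinAt.fun_sum fun n hn => ?_
  have hnN : n + 1 ≤ N := Finset.mem_range.1 hn
  refine (((hY.hasDeriv (n + 1) (by omega) hnN t ht).fun_sub
    (hX.hasDeriv (n + 1) (by omega) hnN t ht)).fun_pow 2).congr_deriv ?_
  push_cast
  ring

lemma SolvesUpTo.sq_sub_le {X Y : ℕ → ℝ → ℝ} (hX : SolvesUpTo b ν x N T X)
    (hY : SolvesUpTo b ν x N T Y) (hK : 0 ≤ K) (hdom : DissipationDominates b ν c K)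
    (hXc : ∀ n, ∀ t ∈ Icc 0 T, |X n t| ≤ c n) {n : ℕ} (hn : 1 ≤ n) (hnN : n ≤ N) {t : ℝ}
    (ht : t ∈ Icc 0 T) :
    (Y n t - X n t) ^ 2 ≤
      Real.exp (2 * K * T) * (4 * (|b N| * ∫ u in (0 : ℝ)..T, boundaryCubes X Y N u)) := by
  have hcubes := continuousOn_boundaryCubes hX.continuousOn hY.continuousOn N
  have hgrowth := le_exp_mul_add_integral_of_hasDerivWithinAt_le (mul_nonneg zero_le_two hK)
    (hcubes.const_mul (4 * |b N|))
    (fun u _ => mul_nonneg (by positivity) (boundaryCubes_nonneg X Y N u))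
    (fun u hu => hX.hasDerivWithinAt_sum_sq_sub hY hu)
    (fun u hu => by
      have hsum := hdom.sum_sub_mul_dyadicField_sub_le (X := (X · u)) (Y := (Y · u)) (hX.zero u)
        (hY.zero u) (fun n => hXc n u hu) N
      have hflux := mul_le_mul_of_nonneg_left
        (mul_abs_sub_mul_abs_sub_le_boundaryCubes X Y N u) (abs_nonneg (b N))
      linarith) ht
  have hinit : ∑ k ∈ Finset.range N, (Y (k + 1) 0 - X (k + 1) 0) ^ 2 = 0 :=
    Finset.sum_eq_zero fun k hk => by
      have hkN : k + 1 ≤ N := Finset.mem_range.1 hk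
      rw [hX.init (k + 1) (by omega) hkN, hY.init (k + 1) (by omega) hkN, sub_self,
        zero_pow two_ne_zero]
  have hmono :
      ∫ u in (0 : ℝ)..t, boundaryCubes X Y N u ≤ ∫ u in (0 : ℝ)..T, boundaryCubes X Y N u :=
    intervalIntegral.integral_mono_interval le_rfl ht.1 ht.2
      (Eventually.of_forall fun u => boundaryCubes_nonneg X Y N u)
      (hcubes.intervalIntegrable_of_Icc (ht.1.trans ht.2))
  rw [hinit, zero_add, intervalIntegral.integral_const_mul] at hgrowth
  obtain ⟨k, rfl⟩ := Nat.exists_eq_add_of_le' hn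
  calc (Y (k + 1) t - X (k + 1) t) ^ 2
      ≤ ∑ k ∈ Finset.range N, (Y (k + 1) t - X (k + 1) t) ^ 2 :=
        Finset.single_le_sum (f := fun k => (Y (k + 1) t - X (k + 1) t) ^ 2)
          (fun _ _ => sq_nonneg _) (Finset.mem_range.2 hnN)
    _ ≤ _ := hgrowth
    _ ≤ Real.exp (2 * K * T) * (4 * |b N| * ∫ u in (0 : ℝ)..T, boundaryCubes X Y N u) := by
        have hint0 := intervalIntegral.integral_nonneg (μ := volume) ht.1
          fun u _ => boundaryCubes_nonneg X Y N u
        gcongr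
        exact ht.2
    _ = _ := by rw [mul_assoc 4]

lemma eq_of_tendsto_integral_boundaryCubes {X Y : ℕ → ℝ → ℝ} (hX : ∀ N, SolvesUpTo b ν x N T X)
    (hY : ∀ N, SolvesUpTo b ν x N T Y) (hK : 0 ≤ K) (hdom : DissipationDominates b ν c K)
    (hXc : ∀ n, ∀ t ∈ Icc 0 T, |X n t| ≤ c n)
    (hflux : Tendsto (fun N => |b N| * ∫ u in (0 : ℝ)..T, boundaryCubes X Y N u) atTop (𝓝 0))
    {n : ℕ} (hn : 1 ≤ n) {t : ℝ} (ht : t ∈ Icc 0 T) : Y n t = X n t := by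
  have hbound := (hflux.const_mul 4).const_mul (Real.exp (2 * K * T))
  simp only [mul_zero] at hbound
  have hsq := ge_of_tendsto hbound (eventually_atTop.2
    ⟨n, fun N hN => (hX N).sq_sub_le (hY N) hK hdom hXc hn hN ht⟩)
  exact sub_eq_zero.1 (pow_eq_zero_iff two_ne_zero |>.1 (hsq.antisymm (sq_nonneg _)))

end Stability

section GalerkinLimit

variable {b ν c x : ℕ → ℝ} {K T : ℝ}

lemma continuousOn_dyadicField {X : ℕ → ℝ → ℝ} {s : Set ℝ} (hX : ∀ n, ContinuousOn (X n) s)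
    (n : ℕ) : ContinuousOn (fun t => dyadicField b ν (X · t) n) s := by
  unfold dyadicField
  fun_prop

lemma tendsto_dyadicField {ι : Type*} {l : Filter ι} {G : ι → ℕ → ℝ} {X : ℕ → ℝ}
    (h : ∀ n, Tendsto (G · n) l (𝓝 (X n))) (n : ℕ) :
    Tendsto (fun i => dyadicField b ν (G i) n) l (𝓝 (dyadicField b ν X n)) :=
  ((((h (n - 1)).pow 2).const_mul _).sub (((h n).const_mul _).mul (h (n + 1)))).sub
    ((h n).const_mul _)

lemma abs_dyadicField_le {X : ℕ → ℝ} (hX : ∀ n, |X n| ≤ c n) (n : ℕ) :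
    |dyadicField b ν X n|
      ≤ |b (n - 1)| * c (n - 1) ^ 2 + |b n| * c n * c (n + 1) + |ν n| * c n := by
  have hc := fun n => (abs_nonneg _).trans (hX n)
  calc |dyadicField b ν X n|
      ≤ |b (n - 1) * X (n - 1) ^ 2| + |b n * X n * X (n + 1)| + |ν n * X n| :=
        (abs_sub _ _).trans (add_le_add_left (abs_sub _ _) _)
    _ ≤ _ := by
        simp only [abs_mul, abs_pow]
        have := hc n
        gcongr <;> exact hX _

lemma SolvesUpTo.sq_sub_le_of_abs_le {X Y : ℕ → ℝ → ℝ} {N : ℕ} (hX : SolvesUpTo b ν x N T X)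
    (hY : SolvesUpTo b ν x N T Y) (hK : 0 ≤ K) (hdom : DissipationDominates b ν c K)
    (hXc : ∀ n, ∀ t ∈ Icc 0 T, |X n t| ≤ c n) (hYc : ∀ n, ∀ t ∈ Icc 0 T, |Y n t| ≤ c n)
    (hc : Antitone c) {n : ℕ} (hn : n ≤ N) {t : ℝ} (ht : t ∈ Icc 0 T) :
    (Y n t - X n t) ^ 2 ≤ Real.exp (2 * K * T) * (16 * T * (|b N| * c N ^ 3)) := by
  have hT : 0 ≤ T := ht.1.trans ht.2
  have hc0 : 0 ≤ c N := (abs_nonneg _).trans (hXc N t ht)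
  rcases n.eq_zero_or_pos with rfl | hn0
  · rw [hX.zero, hY.zero, sub_self, zero_pow two_ne_zero]
    positivity
  have hcubes : ∀ u ∈ Icc 0 T, boundaryCubes X Y N u ≤ 4 * c N ^ 3 := fun u hu => by
    have hle := hc N.le_succ
    have hX1 := (hXc (N + 1) u hu).trans hle
    have hY1 := (hYc (N + 1) u hu).trans hle
    calc boundaryCubes X Y N u ≤ c N ^ 3 + c N ^ 3 + (c N ^ 3 + c N ^ 3) := by
          unfold boundaryCubes
          gcongr
          exacts [hXc N u hu, hYc N u hu]
      _ = 4 * c N ^ 3 := by ring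
  have hint : ∫ u in (0 : ℝ)..T, boundaryCubes X Y N u ≤ 4 * (T * c N ^ 3) := by
    simpa using intervalIntegral.integral_mono_on hT
      ((continuousOn_boundaryCubes hX.continuousOn hY.continuousOn N).intervalIntegrable_of_Icc hT)
      (intervalIntegrable_const (μ := volume)) hcubes
  calc (Y n t - X n t) ^ 2
      ≤ Real.exp (2 * K * T) * (4 * (|b N| * ∫ u in (0 : ℝ)..T, boundaryCubes X Y N u)) :=
        hX.sq_sub_le hY hK hdom hXc hn0 hn ht
    _ ≤ Real.exp (2 * K * T) * (4 * (|b N| * (4 * (T * c N ^ 3)))) := by gcongr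
    _ = _ := by ring

variable {G : ℕ → ℕ → ℝ → ℝ}

lemma uniformCauchySeqOn_isGalerkin (hG : ∀ N, IsGalerkin b ν x N N (G N)) (hK : 0 ≤ K)
    (hdom : DissipationDominates b ν c K) (hGc : ∀ (N : ℕ) n, ∀ t ∈ Icc 0 (N : ℝ), |G N n t| ≤ c n)
    (hc : Antitone c) (hbc : Tendsto (fun n => |b n| * c n ^ 3) atTop (𝓝 0)) (n : ℕ) (T : ℝ) :
    UniformCauchySeqOn (fun N => G N n) atTop (Icc 0 T) := by
  refine Metric.uniformCauchySeqOn_iff.2 fun ε hε => ?_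
  have hlim := (hbc.const_mul (16 * T)).const_mul (Real.exp (2 * K * T))
  simp only [mul_zero] at hlim
  obtain ⟨M, hMε, hnM, hTM⟩ := ((hlim.eventually_lt_const (show 0 < (ε / 2) ^ 2 by positivity)).and
    ((eventually_ge_atTop n).and (tendsto_natCast_atTop_atTop.eventually_ge_atTop T))).exists
  have hclose : ∀ N ≥ M, ∀ t ∈ Icc 0 T, dist (G N n t) (G M n t) < ε / 2 := fun N hN t ht => by
    have hTN : T ≤ N := hTM.trans (by exact_mod_cast hN)
    have hsq := ((hG M).mono le_rfl hTM).sq_sub_le_of_abs_le ((hG N).mono hN hTN) hK hdom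
      (fun n t ht => hGc M n t (Icc_subset_Icc_right hTM ht))
      (fun n t ht => hGc N n t (Icc_subset_Icc_right hTN ht)) hc hnM ht
    exact abs_lt_of_sq_lt_sq (hsq.trans_lt hMε) (by positivity)
  refine ⟨M, fun N hN N' hN' t ht => (dist_triangle_right _ _ (G M n t)).trans_lt ?_⟩
  linarith [hclose N hN t ht, hclose N' hN' t ht]

lemma SolvesUpTo.of_tendstoUniformlyOn {X : ℕ → ℝ → ℝ} {N : ℕ}
    (hG : ∀ᶠ M in atTop, SolvesUpTo b ν x N T (G M))
    (hGc : ∀ᶠ M in atTop, ∀ n, ∀ t ∈ Icc 0 T, |G M n t| ≤ c n) (hX0 : ∀ t, X 0 t = 0)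
    (hlim : ∀ n, TendstoUniformlyOn (fun M => G M n) (X n) atTop (Icc 0 T))
    (hT : 0 ≤ T) : SolvesUpTo b ν x N T X := by
  have hptw : ∀ n, ∀ t ∈ Icc 0 T, Tendsto (G · n t) atTop (𝓝 (X n t)) := fun n t ht =>
    (hlim n).tendsto_at ht
  have hcont : ∀ n, ContinuousOn (X n) (Icc 0 T) := fun n =>
    (hlim n).continuousOn (hG.mono fun M hM => hM.continuousOn n).frequently
  obtain ⟨M₀, hM₀⟩ := eventually_atTop.1 (hG.and hGc)
  refine ⟨hX0, fun n hn hnN => ?_, hcont, fun n hn hnN t ht => ?_⟩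
  · exact tendsto_nhds_unique_of_eventuallyEq (hptw n 0 (left_mem_Icc.2 hT)) tendsto_const_nhds
      (hG.mono fun M hM => hM.init n hn hnN)
  · have hshift := fun M => hM₀ (M + M₀) (Nat.le_add_left _ _)
    exact hasDerivWithinAt_of_tendsto_of_dominated
      (fun M => (hshift M).1.hasDeriv n hn hnN)
      (fun M => continuousOn_dyadicField (hshift M).1.continuousOn n)
      (fun M u hu => abs_dyadicField_le (fun n => (hshift M).2 n u hu) n)
      (continuousOn_dyadicField hcont n)
      (fun u hu => (hptw n u hu).comp (tendsto_add_atTop_nat M₀))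
      (fun u hu => (tendsto_dyadicField (fun n => hptw n u hu) n).comp (tendsto_add_atTop_nat M₀))
      ht

lemma exists_tendsto_isGalerkin (hG : ∀ N, IsGalerkin b ν x N N (G N)) (hK : 0 ≤ K)
    (hdom : DissipationDominates b ν c K) (hGc : ∀ (N : ℕ) n, ∀ t ∈ Icc 0 (N : ℝ), |G N n t| ≤ c n)
    (hc : Antitone c) (hbc : Tendsto (fun n => |b n| * c n ^ 3) atTop (𝓝 0)) :
    ∃ X : ℕ → ℝ → ℝ, (∀ N T, 0 ≤ T → SolvesUpTo b ν x N T X) ∧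
      ∀ n t, 0 ≤ t → Tendsto (G · n t) atTop (𝓝 (X n t)) := by
  have hcauchy := uniformCauchySeqOn_isGalerkin hG hK hdom hGc hc hbc
  let X : ℕ → ℝ → ℝ := fun n t => limUnder atTop (G · n t)
  have hlim : ∀ n t, 0 ≤ t → Tendsto (G · n t) atTop (𝓝 (X n t)) := fun n t ht =>
    ((hcauchy n t).cauchySeq (right_mem_Icc.2 ht)).tendsto_limUnder
  have hX0 : ∀ t, X 0 t = 0 := fun t =>
    (tendsto_const_nhds.congr fun N => ((hG N).zero t).symm).limUnder_eq
  refine ⟨X, fun N T hT => ?_, hlim⟩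
  have hge : ∀ᶠ M : ℕ in atTop, N ≤ M ∧ T ≤ M :=
    (eventually_ge_atTop N).and (tendsto_natCast_atTop_atTop.eventually_ge_atTop T)
  exact SolvesUpTo.of_tendstoUniformlyOn (hge.mono fun M hM => (hG M).mono hM.1 hM.2)
    (hge.mono fun M hM n t ht => hGc M n t (Icc_subset_Icc_right hM.2 ht)) hX0
    (fun n => (hcauchy n T).tendstoUniformlyOn_of_tendsto fun t ht => hlim n t ht.1) hT

end GalerkinLimit

/-- Coefficients of the dyadic system for which initial states of `ρ`-weighted finite energy have
global solutions. The ratios `γ` of transport to damping grow slower than `ρ ^ n`, yet slowly enough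
for `∑ (γ n)⁻¹` to diverge, and the transport is subcritical with respect to the weight `ρ ^ n`. -/
structure IsSubcritical (b ν γ : ℕ → ℝ) (ρ : ℝ) : Prop where
  one_lt : 1 < ρ
  pos : ∀ n, 0 < γ n
  abs_succ_le : ∀ n, |b (n + 1)| ≤ γ n * ν (n + 1)
  exists_abs_le : ∃ C, ∀ n, |b n| ≤ C * (γ n * ν (n + 1))
  tendsto_div_pow : Tendsto (fun n => γ n / ρ ^ n) atTop (𝓝 0)
  exists_succ_le : ∃ C, ∀ᶠ n in atTop, γ (n + 1) ≤ C * γ n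
  not_summable_inv : ¬Summable fun n => (γ n)⁻¹
  tendsto_abs_div_cube : Tendsto (fun n => |b n| / (ρ ^ n) ^ 3) atTop (𝓝 0)

lemma abs_le_sqrt_mul_div_pow {ρ W : ℝ} (hρ : 0 < ρ) {X : ℕ → ℝ} (h0 : X 0 = 0)
    (hX : ∀ n, (ρ ^ n * X (n + 1)) ^ 2 ≤ W) (n : ℕ) : |X n| ≤ √W * ρ / ρ ^ n := by
  cases n with
  | zero => rw [h0, abs_zero]; positivity
  | succ n =>
    have hpow := pow_pos hρ n
    have habs := Real.abs_le_sqrt (hX n)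
    rw [abs_mul, abs_of_pos hpow, ← le_div_iff₀' hpow] at habs
    rwa [pow_succ, mul_div_mul_right _ _ hρ.ne']

namespace IsSubcritical

variable {b ν γ x : ℕ → ℝ} {ρ V W T : ℝ}

lemma nu_nonneg (h : IsSubcritical b ν γ ρ) (n : ℕ) : 0 ≤ ν (n + 1) :=
  nonneg_of_mul_nonneg_right ((abs_nonneg _).trans (h.abs_succ_le n)) (h.pos n)

lemma pow_pos (h : IsSubcritical b ν γ ρ) (n : ℕ) : 0 < ρ ^ n :=
  _root_.pow_pos (zero_lt_one.trans h.one_lt) n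

lemma antitone_div_pow (h : IsSubcritical b ν γ ρ) (hV : 0 ≤ V) : Antitone fun n => V / ρ ^ n :=
  fun m _ hmn => div_le_div_of_nonneg_left hV (h.pow_pos m) (pow_right_mono₀ h.one_lt.le hmn)

lemma exists_dissipationDominates (h : IsSubcritical b ν γ ρ) (hV : 0 ≤ V) :
    ∃ K, 0 ≤ K ∧ DissipationDominates b ν (fun n => V / ρ ^ n) K := by
  obtain ⟨C, hC⟩ := h.exists_abs_le
  have hsmall : ∀ᶠ n in atTop, (C + 3) * V * (γ n / ρ ^ n) ≤ 2 :=
    (h.tendsto_div_pow.const_mul ((C + 3) * V)).eventually_le_const (by simp)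
  have habsorb : ∀ᶠ n in atTop, |b n| * (V / ρ ^ n)
      + |b (n + 1)| * (V / ρ ^ (n + 1) + 2 * (V / ρ ^ (n + 2))) ≤ 2 * ν (n + 1) := by
    filter_upwards [hsmall] with n hn
    have hρ := zero_lt_one.trans h.one_lt
    calc _ ≤ C * (γ n * ν (n + 1)) * (V / ρ ^ n)
          + γ n * ν (n + 1) * (V / ρ ^ n + 2 * (V / ρ ^ n)) := by
          have h1 := h.antitone_div_pow hV n.le_succ
          have h2 := h.antitone_div_pow hV (show n ≤ n + 2 by omega)
          have h3 := (abs_nonneg _).trans (h.abs_succ_le n)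
          gcongr
          exacts [hC n, h.abs_succ_le n]
      _ = (C + 3) * V * (γ n / ρ ^ n) * ν (n + 1) := by ring
      _ ≤ 2 * ν (n + 1) := mul_le_mul_of_nonneg_right hn (h.nu_nonneg n)
  obtain ⟨K, hK, hle⟩ := exists_forall_le_add_of_eventually_le habsorb
  exact ⟨K / 2, by positivity, fun n => (hle n).trans_eq (by ring)⟩

lemma exists_summable_forall_isGalerkin_sq_le (h : IsSubcritical b ν γ ρ)
    (hx : Summable fun n => (ρ ^ n * x (n + 1)) ^ 2) :
    ∃ q : ℕ → ℝ, Summable q ∧ ∀ N T X, 0 ≤ T → IsGalerkin b ν x N T X →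
      ∀ n, ∀ t ∈ Icc 0 T, (ρ ^ n * X (n + 1) t) ^ 2 ≤ q n := by
  have hx_sq : Summable fun n => x (n + 1) ^ 2 :=
    hx.of_nonneg_of_le (fun n => sq_nonneg _) fun n => by
      rw [mul_pow]
      exact le_mul_of_one_le_left (sq_nonneg _) (one_le_pow₀ (one_le_pow₀ h.one_lt.le))
  obtain ⟨C, hC⟩ := h.exists_succ_le
  obtain ⟨q, hq, hDq⟩ := IsTailEnvelope.exists_summable_forall_sq_le h.one_lt h.pos
    h.tendsto_div_pow hC h.not_summable_inv (fun n => Real.sqrt_nonneg _)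
    (summable_sq_pow_mul_sqrt_tsum_shift h.one_lt hx)
  refine ⟨q, hq, fun N T X hT hX n t ht => ?_⟩
  obtain ⟨D, hD, hXD⟩ := hX.exists_isTailEnvelope hT h.nu_nonneg (fun n => (h.pos n).le)
    h.abs_succ_le (Real.sqrt_nonneg _) (sum_Ico_le_sq_sqrt_tsum_shift hx_sq)
  refine le_trans ?_ (hDq D hD n)
  rw [mul_pow, mul_pow]
  exact mul_le_mul_of_nonneg_left (sq_le_sq.2 ((hXD n t ht).trans (le_abs_self _))) (sq_nonneg _)

theorem exists_solvesUpTo (h : IsSubcritical b ν γ ρ)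
    (hx : Summable fun n => (ρ ^ n * x (n + 1)) ^ 2) :
    ∃ (X : ℕ → ℝ → ℝ) (q : ℕ → ℝ), Summable q ∧ (∀ N T, 0 ≤ T → SolvesUpTo b ν x N T X) ∧
      ∀ n t, 0 ≤ t → (ρ ^ n * X (n + 1) t) ^ 2 ≤ q n := by
  obtain ⟨q, hq, hGq⟩ := h.exists_summable_forall_isGalerkin_sq_le hx
  obtain ⟨W, hW⟩ := hq.tendsto_atTop_zero.bddAbove_range
  have hV : 0 ≤ √W * ρ := mul_nonneg (Real.sqrt_nonneg _) (zero_lt_one.trans h.one_lt).le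
  obtain ⟨K, hK, hdom⟩ := h.exists_dissipationDominates hV
  choose G hG using fun N : ℕ => exists_isGalerkin b x h.nu_nonneg N (Nat.cast_nonneg N)
  have hGc : ∀ (N : ℕ) n, ∀ t ∈ Icc 0 (N : ℝ), |G N n t| ≤ √W * ρ / ρ ^ n := fun N n t ht =>
    abs_le_sqrt_mul_div_pow (X := (G N · t)) (zero_lt_one.trans h.one_lt) ((hG N).zero t)
      (fun n => (hGq N N _ (Nat.cast_nonneg N) (hG N) n t ht).trans (hW (mem_range_self n))) n
  have hbc : Tendsto (fun n => |b n| * (√W * ρ / ρ ^ n) ^ 3) atTop (𝓝 0) := by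
    have hlim := h.tendsto_abs_div_cube.const_mul ((√W * ρ) ^ 3)
    rw [mul_zero] at hlim
    exact hlim.congr fun n => by ring
  obtain ⟨X, hX, hlim⟩ := exists_tendsto_isGalerkin hG hK hdom hGc (h.antitone_div_pow hV) hbc
  refine ⟨X, q, hq, hX, fun n t ht => ?_⟩
  refine le_of_tendsto (((hlim (n + 1) t ht).const_mul (ρ ^ n)).pow 2) ?_
  filter_upwards [tendsto_natCast_atTop_atTop.eventually_ge_atTop t] with N hN
  exact hGq N N _ (Nat.cast_nonneg N) (hG N) n t ⟨ht, hN⟩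

theorem eq_of_tendsto_integral_boundaryCubes (h : IsSubcritical b ν γ ρ) {X Y : ℕ → ℝ → ℝ}
    (hX : ∀ N, SolvesUpTo b ν x N T X) (hY : ∀ N, SolvesUpTo b ν x N T Y)
    (hXW : ∀ n, ∀ t ∈ Icc 0 T, (ρ ^ n * X (n + 1) t) ^ 2 ≤ W)
    (hflux : Tendsto (fun N => |b N| * ∫ u in (0 : ℝ)..T, boundaryCubes X Y N u) atTop (𝓝 0))
    {n : ℕ} (hn : 1 ≤ n) {t : ℝ} (ht : t ∈ Icc 0 T) : Y n t = X n t := by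
  have hρ := zero_lt_one.trans h.one_lt
  obtain ⟨K, hK, hdom⟩ := h.exists_dissipationDominates (V := √W * ρ) (by positivity)
  exact _root_.eq_of_tendsto_integral_boundaryCubes hX hY hK hdom
    (fun n t ht => abs_le_sqrt_mul_div_pow (X := (X · t)) hρ ((hX n).zero t)
      (fun n => hXW n t ht) n) hflux hn ht

end IsSubcritical

section DyadicModel

variable {β s T : ℝ} {φ g x q : ℕ → ℝ} {X Y : ℕ → ℝ → ℝ}

lemma kk_pos (β : ℝ) (n : ℕ) : 0 < kk β n := Real.rpow_pos_of_pos two_pos _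

lemma kk_eq_pow (β : ℝ) (n : ℕ) : kk β n = ((2 : ℝ) ^ β) ^ n :=
  Real.rpow_mul_natCast zero_le_two β n

lemma kk_succ (β : ℝ) (n : ℕ) : kk β (n + 1) = 2 ^ β * kk β n := by
  rw [kk_eq_pow, kk_eq_pow, pow_succ']

lemma isDyadicSolution_iff : IsDyadicSolution β φ g x X ↔ ∀ N T, 0 ≤ T →
    SolvesUpTo (fun n => φ n * kk β n) (fun n => kk β n / g n) x N T X := by
  refine ⟨fun ⟨hzero, hinit, hderiv⟩ N T _ => ⟨hzero, fun n hn _ => hinit n hn, fun n => ?_,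
    fun n hn _ t ht => (hderiv n hn t ht.1).mono Icc_subset_Ici_self⟩,
    fun h => ⟨(h 0 0 le_rfl).zero, fun n hn => (h n 0 le_rfl).init n hn le_rfl,
      fun n hn t ht => ?_⟩⟩
  · rcases n.eq_zero_or_pos with rfl | hn
    · exact continuousOn_const.congr fun t _ => hzero t
    · exact fun t ht => (hderiv n hn t ht.1).continuousWithinAt.mono Icc_subset_Ici_self
  · exact ((h n (t + 1) (by positivity)).hasDeriv n hn le_rfl t ⟨ht, by linarith⟩
      ).mono_of_mem_nhdsWithin (inter_mem_nhdsWithin (Ici 0) (Iic_mem_nhds (lt_add_one t)))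

lemma rpow_two_mul_mul_add_one_mul_sq (s y : ℝ) (n : ℕ) :
    (2 : ℝ) ^ (2 * s * ((n : ℝ) + 1)) * y ^ 2 = (2 ^ s) ^ 2 * ((2 ^ s) ^ n * y) ^ 2 := by
  have hweight : (2 : ℝ) ^ (2 * s * ((n : ℝ) + 1)) = (2 ^ s) ^ (2 * (n + 1)) := by
    rw [← Real.rpow_mul_natCast zero_le_two]
    push_cast
    ring_nf
  rw [hweight]
  ring

lemma memHs_iff : MemHs s x ↔ Summable fun n => (((2 : ℝ) ^ s) ^ n * x (n + 1)) ^ 2 := by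
  simp only [MemHs, rpow_two_mul_mul_add_one_mul_sq]
  exact summable_mul_left_iff (by positivity)

lemma memLinftyHs_of_sq_le (hq : Summable q) {I : Set ℝ}
    (hX : ∀ n, ∀ t ∈ I, (((2 : ℝ) ^ s) ^ n * X (n + 1) t) ^ 2 ≤ q n) : MemLinftyHs s X I := by
  simp only [MemLinftyHs, rpow_two_mul_mul_add_one_mul_sq]
  have hq' := hq.mul_left (((2 : ℝ) ^ s) ^ 2)
  refine ⟨∑' n, ((2 : ℝ) ^ s) ^ 2 * q n, fun t ht => ?_⟩
  have hle := fun n => mul_le_mul_of_nonneg_left (hX n t ht) (sq_nonneg ((2 : ℝ) ^ s))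
  have hsum := hq'.of_nonneg_of_le (fun n => by positivity) hle
  exact ⟨hsum, hsum.tsum_le_tsum hle hq'⟩

lemma memL3W_of_sq_le (hs : β ≤ 3 * s) (hq : Summable q)
    (hX : ∀ n, ∀ t ∈ Ioc 0 T, (((2 : ℝ) ^ s) ^ n * X (n + 1) t) ^ 2 ≤ q n) : MemL3W β X T := by
  obtain ⟨W, hW⟩ := hq.tendsto_atTop_zero.bddAbove_range
  set ρ : ℝ := 2 ^ s
  have hρ : 0 < ρ := by positivity
  have hweight : ∀ n : ℕ, (2 : ℝ) ^ (β * ((n : ℝ) + 1)) ≤ ρ ^ 3 * (ρ ^ n) ^ 3 := fun n => by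
    have hβρ : (2 : ℝ) ^ β ≤ ρ ^ 3 := by
      rw [← Real.rpow_mul_natCast zero_le_two]
      exact Real.rpow_le_rpow_of_exponent_le one_le_two (by push_cast; linarith)
    calc (2 : ℝ) ^ (β * ((n : ℝ) + 1)) = (2 ^ β) ^ (n + 1) := by
          rw [← Real.rpow_mul_natCast zero_le_two]
          push_cast
          rfl
      _ ≤ (ρ ^ 3) ^ (n + 1) := by gcongr
      _ = ρ ^ 3 * (ρ ^ n) ^ 3 := by ring
  have hterm : ∀ n : ℕ, ∀ t ∈ Ioc 0 T,
      (2 : ℝ) ^ (β * ((n : ℝ) + 1)) * |X (n + 1) t| ^ 3 ≤ ρ ^ 3 * √W * q n := fun n t ht => by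
    have hq_le : q n ≤ W := hW (mem_range_self n)
    calc _ ≤ ρ ^ 3 * (ρ ^ n) ^ 3 * |X (n + 1) t| ^ 3 := by gcongr; exact hweight n
      _ = ρ ^ 3 * |ρ ^ n * X (n + 1) t| * (ρ ^ n * X (n + 1) t) ^ 2 := by
          rw [← sq_abs (ρ ^ n * X (n + 1) t), abs_mul, abs_of_pos (pow_pos hρ n)]
          ring
      _ ≤ ρ ^ 3 * √W * q n := by
          gcongr
          exacts [Real.abs_le_sqrt ((hX n t ht).trans hq_le), hX n t ht]
  calc _ ≤ ∫⁻ _ in Ioc 0 T, ∑' n, ENNReal.ofReal (ρ ^ 3 * √W * q n) :=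
        setLIntegral_mono' measurableSet_Ioc fun t ht =>
          ENNReal.tsum_le_tsum fun n => ENNReal.ofReal_le_ofReal (hterm n t ht)
    _ < ⊤ := by
        rw [setLIntegral_const]
        exact ENNReal.mul_lt_top (hq.mul_left _).tsum_ofReal_lt_top measure_Ioc_lt_top

lemma MemL3W.tendsto_kk_mul_integral (h : MemL3W β X T) (hT : 0 ≤ T)
    (hX : ∀ n, ContinuousOn (X n) (Icc 0 T)) :
    Tendsto (fun n => kk β n * ∫ u in (0 : ℝ)..T, |X n u| ^ 3) atTop (𝓝 0) := by
  rw [← tendsto_add_atTop_iff_nat 1]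
  have hcont : ∀ n, ContinuousOn (fun u => kk β (n + 1) * |X (n + 1) u| ^ 3) (Ioc 0 T) := fun n =>
    (continuousOn_const.mul ((hX (n + 1)).abs.pow 3)).mono Ioc_subset_Icc_self
  have hkk : ∀ n : ℕ, (2 : ℝ) ^ (β * ((n : ℝ) + 1)) = kk β (n + 1) := fun n => by simp [kk]
  simp only [MemL3W, hkk] at h
  rw [lintegral_tsum fun n => ((hcont n).aemeasurable measurableSet_Ioc).ennreal_ofReal] at h
  have hlim := (ENNReal.tendsto_toReal ENNReal.zero_ne_top).comp
    (ENNReal.tendsto_atTop_zero_of_tsum_ne_top h.ne)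
  rw [ENNReal.toReal_zero] at hlim
  refine hlim.congr fun n => ?_
  rw [← intervalIntegral.integral_const_mul, intervalIntegral.integral_of_le hT,
    integral_eq_lintegral_of_nonneg_ae _ ((hcont n).aestronglyMeasurable measurableSet_Ioc)]
  · rfl
  · exact Eventually.of_forall fun u => mul_nonneg (kk_pos β _).le (by positivity)

lemma tendsto_kk_mul_integral_boundaryCubes (hT : 0 ≤ T) (hX : ∀ n, ContinuousOn (X n) (Icc 0 T))
    (hY : ∀ n, ContinuousOn (Y n) (Icc 0 T)) (hXL : MemL3W β X T) (hYL : MemL3W β Y T) :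
    Tendsto (fun N => kk β N * ∫ u in (0 : ℝ)..T, boundaryCubes X Y N u) atTop (𝓝 0) := by
  have hshift : ∀ Z : ℕ → ℝ → ℝ, (∀ n, ContinuousOn (Z n) (Icc 0 T)) → MemL3W β Z T →
      Tendsto (fun n => kk β n * ∫ u in (0 : ℝ)..T, |Z n u| ^ 3 + |Z (n + 1) u| ^ 3)
        atTop (𝓝 0) := fun Z hZ hZL => by
    have hint : ∀ n, IntervalIntegrable (fun u => |Z n u| ^ 3) volume 0 T := fun n =>
      ((hZ n).abs.pow 3).intervalIntegrable_of_Icc hT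
    have hlim := hZL.tendsto_kk_mul_integral hT hZ
    have hsum := hlim.add (((tendsto_add_atTop_iff_nat 1).2 hlim).const_mul (2 ^ β)⁻¹)
    rw [mul_zero, add_zero] at hsum
    refine hsum.congr fun n => ?_
    rw [intervalIntegral.integral_add (hint n) (hint (n + 1)), kk_succ, mul_assoc,
      inv_mul_cancel_left₀ (by positivity), mul_add]
  have hsum := (hshift X hX hXL).add (hshift Y hY hYL)
  rw [add_zero] at hsum
  refine hsum.congr fun n => ?_
  simp only [boundaryCubes]
  rw [← mul_add, ← intervalIntegral.integral_add] <;>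
    exact ContinuousOn.intervalIntegrable_of_Icc hT (by fun_prop)

lemma abs_mul_kk_le {Φ : ℝ} (hΦ : ∀ n, |φ n| ≤ Φ) (β : ℝ) (n : ℕ) :
    |φ n * kk β n| ≤ Φ * kk β n := by
  rw [abs_mul, abs_of_pos (kk_pos β n)]
  exact mul_le_mul_of_nonneg_right (hΦ n) (kk_pos β n).le

lemma tendsto_kk_div_pow_cube (hs : β / 3 < s) :
    Tendsto (fun n => kk β n / (((2 : ℝ) ^ s) ^ n) ^ 3) atTop (𝓝 0) := by
  have hlt : (2 : ℝ) ^ β / (2 ^ s) ^ 3 < 1 := by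
    rw [div_lt_one (by positivity), ← Real.rpow_mul_natCast zero_le_two]
    exact Real.rpow_lt_rpow_of_exponent_lt one_lt_two (by push_cast; linarith)
  refine (tendsto_pow_atTop_nhds_zero_of_lt_one (by positivity) hlt).congr fun n => ?_
  rw [div_pow, ← kk_eq_pow β, pow_right_comm]

lemma isSubcritical_dyadic {Φ : ℝ} (hΦ0 : 0 < Φ) (hΦ : ∀ n, |φ n| ≤ Φ)
    (hgpos : ∀ n, 1 ≤ n → 0 < g n) (hs0 : 0 < s) (hs : β / 3 < s)
    (hg0 : Tendsto (fun n : ℕ => g n * (2 : ℝ) ^ (-s * (n : ℝ))) atTop (𝓝 0))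
    (hgC : ∃ C, ∀ᶠ n in atTop, g (n + 1) ≤ C * g n) (hgdiv : ¬Summable fun n => (g (n + 1))⁻¹) :
    IsSubcritical (fun n => φ n * kk β n) (fun n => kk β n / g n) (fun n => Φ * g (n + 1))
      (2 ^ s) := by
  have hg : ∀ n, 0 < g (n + 1) := fun n => hgpos _ n.succ_pos
  have hγν : ∀ n, Φ * g (n + 1) * (kk β (n + 1) / g (n + 1)) = Φ * kk β (n + 1) := fun n => by
    field_simp [(hg n).ne']
  exact
  { one_lt := Real.one_lt_rpow one_lt_two hs0
    pos := fun n => mul_pos hΦ0 (hg n)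
    abs_succ_le := fun n => (abs_mul_kk_le hΦ β (n + 1)).trans_eq (hγν n).symm
    exists_abs_le := ⟨(2 ^ β)⁻¹, fun n => by
      rw [hγν, kk_succ, mul_left_comm, inv_mul_cancel_left₀ (by positivity)]
      exact abs_mul_kk_le hΦ β n⟩
    tendsto_div_pow := by
      have hlim := ((tendsto_add_atTop_iff_nat 1).2 hg0).const_mul (Φ * 2 ^ s)
      rw [mul_zero] at hlim
      refine hlim.congr fun n => ?_
      rw [Real.rpow_mul_natCast zero_le_two, Real.rpow_neg zero_le_two, inv_pow]
      field_simp
      ring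
    exists_succ_le := hgC.imp fun C hC =>
      ((tendsto_add_atTop_nat 1).eventually hC).mono fun n hn => by
        rw [mul_left_comm]
        exact mul_le_mul_of_nonneg_left hn hΦ0.le
    not_summable_inv := by
      simpa only [mul_inv, summable_mul_left_iff (inv_ne_zero hΦ0.ne')] using hgdiv
    tendsto_abs_div_cube := by
      have hlim := (tendsto_kk_div_pow_cube hs).const_mul Φ
      rw [mul_zero] at hlim
      refine squeeze_zero (fun n => by positivity) (fun n => ?_) hlim
      rw [← mul_div_assoc]
      exact div_le_div_of_nonneg_right (abs_mul_kk_le hΦ β n) (by positivity) }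

lemma IsDyadicSolution.eq_of_memL3W {γ : ℕ → ℝ} {Φ W : ℝ}
    (h : IsSubcritical (fun n => φ n * kk β n) (fun n => kk β n / g n) γ (2 ^ s))
    (hΦ : ∀ n, |φ n| ≤ Φ) (hX : IsDyadicSolution β φ g x X)
    (hY : IsDyadicSolution β φ g x Y) (hXL : MemL3W β X T) (hYL : MemL3W β Y T)
    (hXW : ∀ n, ∀ t ∈ Icc 0 T, (((2 : ℝ) ^ s) ^ n * X (n + 1) t) ^ 2 ≤ W) {n : ℕ} (hn : 1 ≤ n)
    {t : ℝ} (ht : t ∈ Icc 0 T) : Y n t = X n t := by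
  have hT : 0 ≤ T := ht.1.trans ht.2
  have hXsol := fun N => isDyadicSolution_iff.1 hX N T hT
  have hYsol := fun N => isDyadicSolution_iff.1 hY N T hT
  have hlim := (tendsto_kk_mul_integral_boundaryCubes hT (hXsol 0).continuousOn
    (hYsol 0).continuousOn hXL hYL).const_mul Φ
  rw [mul_zero] at hlim
  have hint : ∀ N, 0 ≤ kk β N * ∫ u in (0 : ℝ)..T, boundaryCubes X Y N u := fun N =>
    mul_nonneg (kk_pos β N).le
      (intervalIntegral.integral_nonneg hT fun u _ => boundaryCubes_nonneg X Y N u)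
  refine h.eq_of_tendsto_integral_boundaryCubes hXsol hYsol hXW
    (squeeze_zero (fun N => ?_) (fun N => ?_) hlim) hn ht <;>
    rw [abs_mul, abs_of_pos (kk_pos β N), mul_assoc]
  · exact mul_nonneg (abs_nonneg _) (hint N)
  · exact mul_le_mul_of_nonneg_right (hΦ N) (hint N)

lemma tendsto_mul_rpow_neg_of_summable (hgpos : ∀ n, 1 ≤ n → 0 < g n)
    (hg : Summable fun n : ℕ => (2 : ℝ) ^ (-(2 * s) * ((n : ℝ) + 1)) * g (n + 1) ^ 2) :
    Tendsto (fun n : ℕ => g n * (2 : ℝ) ^ (-s * (n : ℝ))) atTop (𝓝 0) := by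
  rw [← tendsto_add_atTop_iff_nat 1]
  have hsqrt := (Real.continuous_sqrt.tendsto 0).comp hg.tendsto_atTop_zero
  rw [Real.sqrt_zero] at hsqrt
  refine hsqrt.congr fun n => ?_
  have hsq : (2 : ℝ) ^ (-(2 * s) * ((n : ℝ) + 1)) * g (n + 1) ^ 2
      = (g (n + 1) * 2 ^ (-s * ((n + 1 : ℕ) : ℝ))) ^ 2 := by
    rw [← mul_neg, rpow_two_mul_mul_add_one_mul_sq, Real.rpow_mul_natCast zero_le_two]
    ring
  have hg_nonneg := (hgpos (n + 1) n.succ_pos).le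
  rw [Function.comp_apply, hsq, Real.sqrt_sq (by positivity)]

lemma eventually_succ_le_of_eventually_antitone
    (hg : ∃ N : ℕ, ∀ n m : ℕ, N ≤ n → n ≤ m →
      g m * (2 : ℝ) ^ (-s * (m : ℝ)) ≤ g n * (2 : ℝ) ^ (-s * (n : ℝ))) :
    ∀ᶠ n in atTop, g (n + 1) ≤ 2 ^ s * g n := by
  obtain ⟨N, hN⟩ := hg
  filter_upwards [eventually_ge_atTop N] with n hn
  have hle := hN n (n + 1) hn n.le_succ
  rw [Real.rpow_mul_natCast zero_le_two, Real.rpow_mul_natCast zero_le_two, pow_succ',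
    Real.rpow_neg zero_le_two, ← mul_assoc] at hle
  have := le_of_mul_le_mul_right hle (by positivity)
  rwa [← div_eq_mul_inv, div_le_iff₀' (by positivity)] at this

theorem dyadic_global_existence_Hs_general (hφ : ∃ Φ : ℝ, ∀ n, |φ n| ≤ Φ)
    (hgpos : ∀ n, 1 ≤ n → 0 < g n) (hs0 : 0 < s) (hs : β / 3 < s) (hx : MemHs s x)
    (hg0 : Tendsto (fun n : ℕ => g n * (2 : ℝ) ^ (-s * (n : ℝ))) atTop (𝓝 0))
    (hgC : ∃ C, ∀ᶠ n in atTop, g (n + 1) ≤ C * g n) (hgdiv : ¬Summable fun n => (g (n + 1))⁻¹) :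
    ∃ X : ℕ → ℝ → ℝ, IsDyadicSolution β φ g x X ∧ MemLinftyHs s X (Ici 0) ∧
      (∀ T, 0 < T → MemL3W β X T) ∧
      ∀ Y : ℕ → ℝ → ℝ, IsDyadicSolution β φ g x Y → (∀ T, 0 < T → MemL3W β Y T) →
        ∀ n, 1 ≤ n → ∀ t, 0 ≤ t → Y n t = X n t := by
  obtain ⟨Φ', hΦ'⟩ := hφ
  obtain ⟨Φ, hΦ, hΦ0⟩ : ∃ Φ, (∀ n, |φ n| ≤ Φ) ∧ 0 < Φ :=
    ⟨max Φ' 1, fun n => (hΦ' n).trans (le_max_left _ _), lt_max_of_lt_right one_pos⟩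
  have hsub := isSubcritical_dyadic hΦ0 hΦ hgpos hs0 hs hg0 hgC hgdiv
  obtain ⟨X, q, hq, hX, hXq⟩ := hsub.exists_solvesUpTo (memHs_iff.1 hx)
  obtain ⟨W, hW⟩ := hq.tendsto_atTop_zero.bddAbove_range
  have hXsol : IsDyadicSolution β φ g x X := isDyadicSolution_iff.2 hX
  have hXL : ∀ T, 0 < T → MemL3W β X T := fun T _ =>
    memL3W_of_sq_le (by linarith) hq fun n t ht => hXq n t ht.1.le
  refine ⟨X, hXsol, memLinftyHs_of_sq_le hq hXq, hXL, fun Y hY hYL n hn t ht => ?_⟩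
  have hT : 0 < t + 1 := by positivity
  exact hXsol.eq_of_memL3W hsub hΦ hY (hXL _ hT) (hYL _ hT)
    (fun n u hu => (hXq n u hu.1).trans (hW (mem_range_self n))) hn ⟨ht, by linarith⟩

end DyadicModel

/-- Theorem 3.8 (main, general form): for `x ∈ Hˢ` with `s > β/3`, `g ∈ H⁻ˢ` non-decreasing,
`gₙ 2^{-sn}` eventually non-increasing and `∑ 1/gₙ = ∞`, there is a solution in
`L^∞([0,∞); Hˢ)`, unique in `L³_loc([0,∞); W^{β/3,3})`. -/
theorem dyadic_global_existence_Hs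
    (β : ℝ) (hβ : 0 < β) (φ g : ℕ → ℝ)
    (hφ : ∃ Φ : ℝ, ∀ n : ℕ, |φ n| ≤ Φ)
    (hgpos : ∀ n : ℕ, 1 ≤ n → 0 < g n)
    (s : ℝ) (hs : β / 3 < s)
    (x : ℕ → ℝ) (hx : MemHs s x)
    (hgHs : Summable fun n : ℕ => (2 : ℝ) ^ (-(2 * s) * ((n : ℝ) + 1)) * (g (n + 1)) ^ 2)
    (hgmono : ∀ n m : ℕ, 1 ≤ n → n ≤ m → g n ≤ g m)
    (hgs : ∃ N : ℕ, ∀ n m : ℕ, N ≤ n → n ≤ m →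
      g m * (2 : ℝ) ^ (-s * (m : ℝ)) ≤ g n * (2 : ℝ) ^ (-s * (n : ℝ)))
    (hgdiv : ¬ Summable fun n : ℕ => (g (n + 1))⁻¹) :
    ∃ X : ℕ → ℝ → ℝ, IsDyadicSolution β φ g x X ∧
      MemLinftyHs s X (Set.Ici 0) ∧
      (∀ T : ℝ, 0 < T → MemL3W β X T) ∧
      (∀ Y : ℕ → ℝ → ℝ, IsDyadicSolution β φ g x Y →
        (∀ T : ℝ, 0 < T → MemL3W β Y T) →
        ∀ n : ℕ, 1 ≤ n → ∀ t : ℝ, 0 ≤ t → Y n t = X n t) := by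
  exact dyadic_global_existence_Hs_general hφ hgpos (by linarith) hs hx
    (tendsto_mul_rpow_neg_of_summable hgpos hgHs)
    ⟨2 ^ s, eventually_succ_le_of_eventually_antitone hgs⟩ hgdiv
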